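/- arXiv:1404.0165 — 4 statements merged into one kernel-verified Lean document; each statement's English description precedes it below -/
import Mathlib

section
/- Let α be an irrational vector in ℝ^d and let v₁, …, v_d be linearly independent vectors in ℝ^d each belonging to ℤα + ℤ^d. Then the parallelepiped P spanned by v₁, …, v_d is a bounded remainder set with respect to α; moreover, P admits a Riemann integrable transfer function. -/
/-!
The multiplicity `χ_P(x)` counts the `γ = (q, p) ∈ ℤ × ℤ^d` with `q = 0` in the strip
`S_x = {γ | x + q α + p ∈ P}`. Formally, the number of `γ ∈ S_x` with `q ≥ 1` changes by exactly
this amount under the rotation by `α`, so (up to sign) it should be a transfer function; but it is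
infinite. It is regularized by comparison with a second cut of the strip.

Write `v_k = q_k α + p_k` and let `u_k = (q_k, p_k)`. The linear functional `slope` with
`slope v_k = q_k` gives the homomorphism `height (q, p) = q - slope (q α + p)`, which kills every
`u_k` and stays at bounded distance from `q` on a strip. Hence
`G(x) = ∑_{γ ∈ S_x} (1[height γ ≥ 0] - 1[q ≥ 1])` is a finite sum, locally a finite combination of
indicators of translates of `P` (`Tame.exists_finset`).

A translation of `x` by `q α + p` changes the first term by the sum over `S_x` of a function
invariant under the lattice generated by the `u_k`. Since `P` is a fundamental domain of the lattice
generated by the `v_k`, every strip is a transversal of the lattice of the `u_k`, so this change does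
not depend on `x` (`stripSum_const`). Consequently `G(x) - G(x - α) - χ_P(x)` is constant
(`stripSum_wt_sub`), and `G(x + p) - G(x)` is, for `p ∈ ℤ^d`, an additive function of `p` alone.
Adding a linear functional to `G` therefore yields a periodic function `g` (`exists_linear`) with
`χ_P - c = g - g(· - α)`. Periodicity makes `g` bounded, convexity of `P` makes its discontinuity set
null, telescoping bounds the discrepancies, and integrating the telescoped sums over the unit cube
shows `c = Leb P` (`const_eq_volume`).
-/

open MeasureTheory

/-- The multiplicity function of the projection of `S ⊆ ℝ^d` to the torus `ℝ^d/ℤ^d`,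
viewed as a `ℤ^d`-periodic function on `ℝ^d`. -/
noncomputable def multFn {d : ℕ} (S : Set (Fin d → ℝ)) (x : Fin d → ℝ) : ℝ :=
  ∑' k : Fin d → ℤ, Set.indicator S (fun _ => (1 : ℝ)) (x + fun i => (k i : ℝ))

/-- The discrepancy `∑_{k=0}^{n-1} χ_S(x + k v) − n · Leb(S)`. -/
noncomputable def disc {d : ℕ} (v : Fin d → ℝ) (S : Set (Fin d → ℝ)) (n : ℕ)
    (x : Fin d → ℝ) : ℝ :=
  (∑ k ∈ Finset.range n, multFn S (x + (k : ℝ) • v)) - n * (volume S).toReal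

/-- `S` is a bounded remainder set with respect to the vector `v`. -/
def IsBRS {d : ℕ} (v : Fin d → ℝ) (S : Set (Fin d → ℝ)) : Prop :=
  ∃ C : ℝ, ∀ᵐ x : Fin d → ℝ, ∀ n : ℕ, 1 ≤ n → |disc v S n x| ≤ C

/-- `α ∈ ℝ^d` is an irrational vector: `1, α₁, …, α_d` are linearly independent over `ℚ`. -/
def IsIrrationalVector {d : ℕ} (α : Fin d → ℝ) : Prop :=
  ∀ (n₀ : ℤ) (n : Fin d → ℤ), (n₀ : ℝ) + ∑ i, (n i : ℝ) * α i = 0 → n₀ = 0 ∧ n = 0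

/-- The subgroup `ℤα + ℤ^d` of `ℝ^d`. -/
def lat {d : ℕ} (α : Fin d → ℝ) : Set (Fin d → ℝ) :=
  {v | ∃ (q : ℤ) (p : Fin d → ℤ), v = (q : ℝ) • α + fun i => (p i : ℝ)}

/-- The parallelepiped spanned by the vectors `v 1, …, v d`. -/
def paral {d : ℕ} (v : Fin d → Fin d → ℝ) : Set (Fin d → ℝ) :=
  {x | ∃ t : Fin d → ℝ, (∀ k, 0 ≤ t k ∧ t k < 1) ∧ x = ∑ k, t k • v k}

/-- A `ℤ^d`-periodic function on `ℝ^d`, i.e. a function on the torus. -/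
def IsZdPeriodic {d : ℕ} (g : (Fin d → ℝ) → ℝ) : Prop :=
  ∀ (x : Fin d → ℝ) (k : Fin d → ℤ), g (x + fun i => (k i : ℝ)) = g x

/-- `g` is a transfer function for `S` with respect to `v`:
a function on the torus with `χ_S(x) − Leb S = g(x) − g(x−v)` a.e. -/
def IsTransfer {d : ℕ} (v : Fin d → ℝ) (S : Set (Fin d → ℝ)) (g : (Fin d → ℝ) → ℝ) : Prop :=
  IsZdPeriodic g ∧
    ∀ᵐ x : Fin d → ℝ, multFn S x - (volume S).toReal = g x - g (x - v)

/-- A bounded function whose set of discontinuity points is Lebesgue-null. -/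
def RiemannIntegrableFn {d : ℕ} (g : (Fin d → ℝ) → ℝ) : Prop :=
  (∃ M : ℝ, ∀ x, |g x| ≤ M) ∧ volume {x | ¬ ContinuousAt g x} = 0

/-- A bounded set is Riemann measurable if its boundary is Lebesgue-null. -/
def IsRiemannMeasurable {d : ℕ} (S : Set (Fin d → ℝ)) : Prop :=
  Bornology.IsBounded S ∧ volume (frontier S) = 0

/-- `S` and `S'` are equidecomposable, with pieces satisfying the predicate `P`,
using translations by vectors in `Γ`. -/
def EquidecompBy {d : ℕ} (P : Set (Fin d → ℝ) → Prop)
    (S S' : Set (Fin d → ℝ)) (Γ : Set (Fin d → ℝ)) : Prop :=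
  ∃ (N : ℕ) (A : Fin N → Set (Fin d → ℝ)) (γ : Fin N → Fin d → ℝ),
    (∀ i, P (A i)) ∧ (∀ i, γ i ∈ Γ) ∧
    (∀ i j, i ≠ j → volume (A i ∩ A j) = 0) ∧
    volume (symmDiff S (⋃ i, A i)) = 0 ∧
    (∀ i j, i ≠ j → volume (((fun x => x + γ i) '' A i) ∩ ((fun x => x + γ j) '' A j)) = 0) ∧
    volume (symmDiff S' (⋃ i, (fun x => x + γ i) '' A i)) = 0

/-- A set is centrally symmetric if it equals its reflection about some point `c`. -/
def IsCentrallySymmetric {d : ℕ} (A : Set (Fin d → ℝ)) : Prop :=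
  ∃ c : Fin d → ℝ, ∀ x, x ∈ A ↔ (2 : ℝ) • c - x ∈ A


/-! ### Sums over strips -/

namespace BRS

variable {d : ℕ}

/-- The evaluation homomorphism `(q, p) ↦ q α + p` from `ℤ × ℤ^d` onto `ℤα + ℤ^d`. -/
noncomputable def val (α : Fin d → ℝ) : (ℤ × (Fin d → ℤ)) →+ (Fin d → ℝ) where
  toFun γ := (γ.1 : ℝ) • α + fun i => (γ.2 i : ℝ)
  map_zero' := by ext i; simp
  map_add' γ δ := by ext i; simp; ring

lemma val_apply (α : Fin d → ℝ) (γ : ℤ × (Fin d → ℤ)) (i : Fin d) :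
    val α γ i = γ.1 * α i + γ.2 i := by simp [val]

/-- The linear functional on `ℝ^d` taking the value `q_k` at the `k`-th basis vector, where `q_k`
is the coefficient of `α` in the chosen representation `u k` of that vector. -/
noncomputable def slope (b : Module.Basis (Fin d) ℝ (Fin d → ℝ)) (u : Fin d → ℤ × (Fin d → ℤ)) :
    (Fin d → ℝ) →ₗ[ℝ] ℝ :=
  b.constr ℝ fun k => ((u k).1 : ℝ)

/-- The homomorphism `(q, p) ↦ q - slope (q α + p)`. It vanishes on the lattice generated by the
`u k`, and differs from `q` by a bounded amount as long as `q α + p` stays bounded. -/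
noncomputable def height (α : Fin d → ℝ) (b : Module.Basis (Fin d) ℝ (Fin d → ℝ))
    (u : Fin d → ℤ × (Fin d → ℤ)) : (ℤ × (Fin d → ℤ)) →+ ℝ where
  toFun γ := γ.1 - slope b u (val α γ)
  map_zero' := by simp
  map_add' γ δ := by simp; ring

/-- The indices `γ` for which `x + γ` lies in the parallelepiped spanned by `b`. -/
def strip (α : Fin d → ℝ) (b : Module.Basis (Fin d) ℝ (Fin d → ℝ)) (x : Fin d → ℝ) :
    Set (ℤ × (Fin d → ℤ)) :=
  {γ | x + val α γ ∈ ZSpan.fundamentalDomain b}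

/-- The sum of `f` over `strip α b x`. -/
noncomputable def stripSum (α : Fin d → ℝ) (b : Module.Basis (Fin d) ℝ (Fin d → ℝ))
    (f : ℤ × (Fin d → ℤ) → ℝ) (x : Fin d → ℝ) : ℝ :=
  ∑ᶠ γ ∈ strip α b x, f γ

/-- A sufficient condition on `f` for the sums `stripSum α b f x` to be finite, locally uniformly
in `x`. -/
def Tame (α : Fin d → ℝ) (b : Module.Basis (Fin d) ℝ (Fin d → ℝ))
    (u : Fin d → ℤ × (Fin d → ℤ)) (f : ℤ × (Fin d → ℤ) → ℝ) : Prop :=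
  ∃ M : ℝ, ∀ γ, f γ ≠ 0 → |(γ.1 : ℝ)| ≤ |height α b u γ - γ.1| + M

variable {α : Fin d → ℝ} {b : Module.Basis (Fin d) ℝ (Fin d → ℝ)}
  {u : Fin d → ℤ × (Fin d → ℤ)} {f g : ℤ × (Fin d → ℤ) → ℝ}

lemma height_apply (γ : ℤ × (Fin d → ℤ)) :
    height α b u γ = γ.1 - slope b u (val α γ) := rfl

lemma height_u (hu : ∀ k, val α (u k) = b k) (k : Fin d) : height α b u (u k) = 0 := by
  simp [height_apply, hu, slope]

/-- For `x` in a ball only finitely many `γ` contribute: `q α + p` is bounded on the strips, hence so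
is `height - q`, then `q` by tameness, and finally `p`. -/
lemma Tame.finite (hf : Tame α b u f) (R : ℝ) :
    {γ | f γ ≠ 0 ∧ ∃ x : Fin d → ℝ, ‖x‖ ≤ R ∧ γ ∈ strip α b x}.Finite := by
  obtain ⟨M, hM⟩ := hf
  obtain ⟨K, hK⟩ := (ZSpan.fundamentalDomain_isBounded b).exists_norm_le
  set l := LinearMap.toContinuousLinearMap (slope b u)
  set B := ‖l‖ * (R + K) + M
  obtain ⟨N, hN⟩ := exists_nat_ge (max B (R + K + B * ‖α‖))
  refine ((Set.finite_Icc (-N : ℤ) N).prod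
    (Set.finite_Icc (fun _ : Fin d => (-N : ℤ)) fun _ => (N : ℤ))).subset ?_
  rintro γ ⟨hγ, x, hx, hs⟩
  have h1 : ‖val α γ‖ ≤ R + K := by
    have := norm_sub_le (x + val α γ) x
    rw [add_sub_cancel_left] at this
    linarith [hK _ hs]
  have h2 : |height α b u γ - γ.1| ≤ ‖l‖ * (R + K) := by
    rw [height_apply, sub_sub_cancel_left, abs_neg]
    exact (l.le_opNorm _).trans (mul_le_mul_of_nonneg_left h1 (norm_nonneg _))
  have h3 : |(γ.1 : ℝ)| ≤ B := by linarith [hM γ hγ]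
  have h4 : ∀ i, |(γ.2 i : ℝ)| ≤ R + K + B * ‖α‖ := by
    intro i
    have e : (γ.2 i : ℝ) = val α γ i - γ.1 * α i := by rw [val_apply]; ring
    rw [e]
    refine (abs_sub _ _).trans (add_le_add ((norm_le_pi_norm (val α γ) i).trans h1) ?_)
    rw [abs_mul]
    exact mul_le_mul h3 (norm_le_pi_norm α i) (abs_nonneg _) ((abs_nonneg _).trans h3)
  have h5 : |γ.1| ≤ (N : ℤ) := by
    exact_mod_cast h3.trans ((le_max_left _ _).trans hN)
  have h6 : ∀ i, |γ.2 i| ≤ (N : ℤ) := fun i => by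
    exact_mod_cast (h4 i).trans ((le_max_right _ _).trans hN)
  exact ⟨abs_le.1 h5, fun i => (abs_le.1 (h6 i)).1, fun i => (abs_le.1 (h6 i)).2⟩

lemma Tame.finite_strip (hf : Tame α b u f) (x : Fin d → ℝ) :
    (strip α b x ∩ Function.support f).Finite :=
  (hf.finite ‖x‖).subset fun _ h => ⟨h.2, x, le_rfl, h.1⟩

lemma Tame.sub (hf : Tame α b u f) (hg : Tame α b u g) : Tame α b u fun γ => f γ - g γ := by
  obtain ⟨M, hM⟩ := hf
  obtain ⟨M', hM'⟩ := hg
  refine ⟨max M M', fun γ h => ?_⟩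
  by_cases h0 : f γ = 0
  · have := hM' γ (by rintro h1; simp [h0, h1] at h)
    linarith [le_max_right M M']
  · linarith [hM γ h0, le_max_left M M']

lemma stripSum_sub (hf : Tame α b u f) (hg : Tame α b u g) (x : Fin d → ℝ) :
    stripSum α b (fun γ => f γ - g γ) x = stripSum α b f x - stripSum α b g x := by
  have := finsum_mem_add_distrib' ((hf.sub hg).finite_strip x) (hg.finite_strip x)
  simp only [sub_add_cancel] at this
  simp only [stripSum]
  linarith

/-- On a ball, `stripSum` is a finite linear combination of indicators of translates of the
parallelepiped. -/
lemma Tame.exists_finset (hf : Tame α b u f) (R : ℝ) :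
    ∃ A : Finset (ℤ × (Fin d → ℤ)), ∀ x : Fin d → ℝ, ‖x‖ ≤ R → stripSum α b f x =
      ∑ γ ∈ A, (ZSpan.fundamentalDomain b).indicator (fun _ => f γ) (x + val α γ) := by
  classical
  refine ⟨(hf.finite R).toFinset, fun x hx => ?_⟩
  rw [stripSum, finsum_mem_def, finsum_eq_sum_of_support_subset (s := (hf.finite R).toFinset)]
  · refine Finset.sum_congr rfl fun γ _ => ?_
    simp [Set.indicator, strip]
  · intro γ hγ
    have : γ ∈ strip α b x ∧ f γ ≠ 0 := by
      simpa [Set.indicator_apply] using hγ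
    simpa using ⟨this.2, x, hx, this.1⟩

lemma stripSum_translate (a : ℤ × (Fin d → ℤ)) (x : Fin d → ℝ) :
    stripSum α b (fun γ => f (γ + a)) x = stripSum α b f (x - val α a) := by
  refine finsum_mem_eq_of_bijOn (fun γ => γ + a)
    ((Equiv.addRight a).bijOn fun γ => ?_) fun _ _ => rfl
  simp [strip]

/-- A function invariant under the lattice generated by the `u k` has the same sum over every
strip, since each strip is a transversal of that lattice: reducing modulo the parallelepiped
maps one strip bijectively onto another. -/
lemma stripSum_const (hu : ∀ k, val α (u k) = b k)
    (hf : ∀ γ (n : Fin d → ℤ), f (γ - ∑ k, n k • u k) = f γ) (x y : Fin d → ℝ) :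
    stripSum α b f x = stripSum α b f y := by
  set e : (Fin d → ℝ) → ℤ × (Fin d → ℤ) → ℤ × (Fin d → ℤ) := fun z γ =>
    γ - ∑ k, ⌊b.repr (z + val α γ) k⌋ • u k with he
  have hrepr : ∀ z z' γ k, b.repr (z' + val α (e z γ)) k =
      b.repr (z' + val α γ) k - ⌊b.repr (z + val α γ) k⌋ := by
    intro z z' γ k
    have : z' + val α (e z γ) = (z' + val α γ) - ZSpan.floor b (z + val α γ) := by
      simp only [he, ZSpan.floor, map_sub, map_sum, map_zsmul, hu, Submodule.coe_sum,
        Submodule.coe_smul, Module.Basis.restrictScalars_apply]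
      abel
    rw [this, map_sub, Finsupp.sub_apply, ZSpan.repr_floor_apply]
  have hmaps : ∀ z z', Set.MapsTo (e z) (strip α b z') (strip α b z) := by
    intro z z' γ _ k
    rw [hrepr]
    exact ⟨Int.fract_nonneg _, Int.fract_lt_one _⟩
  have hinv : ∀ z z', Set.LeftInvOn (e z') (e z) (strip α b z') := by
    intro z z' γ hγ
    have : ∀ k, ⌊b.repr (z' + val α (e z γ)) k⌋ = -⌊b.repr (z + val α γ) k⌋ := by
      intro k
      rw [hrepr, Int.floor_sub_intCast, Int.floor_eq_zero_iff.2 (hγ k), zero_sub]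
    change e z γ - ∑ k, ⌊b.repr (z' + val α (e z γ)) k⌋ • u k = γ
    simp only [this, neg_smul, Finset.sum_neg_distrib]
    simp [he]
  exact finsum_mem_eq_of_bijOn (e y)
    (Set.InvOn.bijOn ⟨hinv y x, hinv x y⟩ (hmaps y x) (hmaps x y)) fun γ _ => (hf γ _).symm

/-! ### The weight and its translates -/

/-- The weight comparing the two ways `height ≥ 0` and `q ≥ 1` of cutting a strip in half. -/
noncomputable def wt (α : Fin d → ℝ) (b : Module.Basis (Fin d) ℝ (Fin d → ℝ))
    (u : Fin d → ℤ × (Fin d → ℤ)) (γ : ℤ × (Fin d → ℤ)) : ℝ :=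
  (if 0 ≤ height α b u γ then 1 else 0) - (if 1 ≤ γ.1 then 1 else 0)

/-- The effect on the cut `height ≥ 0` of a translation by `a`. -/
noncomputable def jump (α : Fin d → ℝ) (b : Module.Basis (Fin d) ℝ (Fin d → ℝ))
    (u : Fin d → ℤ × (Fin d → ℤ)) (a γ : ℤ × (Fin d → ℤ)) : ℝ :=
  (if 0 ≤ height α b u γ then 1 else 0) - (if 0 ≤ height α b u (γ + a) then 1 else 0)

/-- The indicator function of `ℤ^d`, i.e. of `q = 0`. -/
noncomputable def slice (γ : ℤ × (Fin d → ℤ)) : ℝ := if γ.1 = 0 then 1 else 0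

lemma tame_wt : Tame α b u (wt α b u) := by
  refine ⟨1, fun γ h => ?_⟩
  unfold wt at h
  have ha := neg_abs_le (height α b u γ - γ.1)
  have hb := le_abs_self (height α b u γ - γ.1)
  by_cases h1 : 0 ≤ height α b u γ <;> by_cases h2 : 1 ≤ γ.1 <;>
    simp only [h1, h2, if_true, if_false] at h
  · norm_num at h
  · have : (γ.1 : ℝ) ≤ 0 := by exact_mod_cast (by omega : γ.1 ≤ 0)
    rw [abs_of_nonpos this]; linarith
  · have : (1 : ℝ) ≤ γ.1 := by exact_mod_cast h2
    rw [abs_of_nonneg (by linarith : (0 : ℝ) ≤ γ.1)]; linarith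
  · norm_num at h

lemma tame_jump (a : ℤ × (Fin d → ℤ)) : Tame α b u (jump α b u a) := by
  refine ⟨|height α b u a|, fun γ h => ?_⟩
  unfold jump at h
  rw [map_add] at h
  have h3 : |height α b u γ| ≤ |height α b u a| := by
    have ha := neg_abs_le (height α b u a)
    have hb := le_abs_self (height α b u a)
    by_cases h1 : 0 ≤ height α b u γ <;> by_cases h2 : 0 ≤ height α b u γ + height α b u a <;>
      simp only [h1, h2, if_true, if_false] at h
    · norm_num at h
    · rw [abs_le]; constructor <;> linarith
    · rw [abs_le]; constructor <;> linarith
    · norm_num at h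
  have := abs_sub (height α b u γ) (height α b u γ - γ.1)
  rw [sub_sub_cancel] at this
  linarith

lemma tame_slice : Tame α b u slice := by
  refine ⟨0, fun γ h => ?_⟩
  have : γ.1 = 0 := by by_contra h1; simp [slice, h1] at h
  simp [this]

lemma stripSum_jump (hu : ∀ k, val α (u k) = b k) (a : ℤ × (Fin d → ℤ)) (x y : Fin d → ℝ) :
    stripSum α b (jump α b u a) x = stripSum α b (jump α b u a) y := by
  refine stripSum_const hu (fun γ n => ?_) x y
  simp only [jump, map_add, map_sub, map_sum, map_zsmul, height_u hu, smul_zero,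
    Finset.sum_const_zero, sub_zero]

/-- A translation by an integer vector leaves the cut `q ≥ 1` unchanged. -/
lemma stripSum_wt_int (p : Fin d → ℤ) (x : Fin d → ℝ) :
    stripSum α b (wt α b u) (x - fun i => (p i : ℝ)) =
      stripSum α b (wt α b u) x - stripSum α b (jump α b u (0, p)) x := by
  have hv : (fun i => (p i : ℝ)) = val α (0, p) := by ext i; simp [val_apply]
  rw [hv, ← stripSum_translate, ← stripSum_sub tame_wt (tame_jump _)]
  congr 1
  ext γ
  simp [wt, jump]

/-- A translation by `α` moves the cut `q ≥ 1` by one unit, so that exactly the elements with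
`q = 0` change sides. -/
lemma stripSum_wt_sub (x : Fin d → ℝ) :
    stripSum α b (wt α b u) (x - α) =
      stripSum α b (wt α b u) x - stripSum α b (jump α b u (1, 0)) x - stripSum α b slice x := by
  have hv : α = val α (1, 0) := by ext i; simp [val_apply]
  have ht : stripSum α b (wt α b u) (x - α) = stripSum α b (fun γ => wt α b u (γ + (1, 0))) x := by
    rw [stripSum_translate, ← hv]
  rw [ht, ← stripSum_sub tame_wt (tame_jump _),
    ← stripSum_sub (tame_wt.sub (tame_jump _)) (tame_slice (u := u))]
  congr 1
  ext γ
  simp only [wt, jump, slice, Prod.fst_add]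
  -- moving from `q` to `q + 1` crosses the cut exactly when `q = 0`
  have : (if 1 ≤ γ.1 + 1 then (1 : ℝ) else 0) =
      (if 1 ≤ γ.1 then 1 else 0) + if γ.1 = 0 then 1 else 0 := by
    split_ifs <;> first | omega | norm_num
  rw [this]
  ring

lemma multFn_eq (x : Fin d → ℝ) :
    multFn (ZSpan.fundamentalDomain b) x = stripSum α b slice x := by
  have hval : ∀ k : Fin d → ℤ, val α (0, k) = fun i => (k i : ℝ) := by
    intro k; ext i; simp [val_apply]
  have hfin := (tame_slice (α := α) (b := b) (u := 0)).finite_strip x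
  have hbij : Set.BijOn (fun k : Fin d → ℤ => ((0 : ℤ), k))
      {k | x + (fun i => (k i : ℝ)) ∈ ZSpan.fundamentalDomain b}
      (strip α b x ∩ Function.support slice) := by
    refine ⟨fun k hk => ⟨?_, ?_⟩, fun k _ k' _ h => (Prod.ext_iff.1 h).2, ?_⟩
    · simpa [strip, hval] using hk
    · simp [slice]
    · rintro ⟨q, k⟩ ⟨h1, h2⟩
      have : q = 0 := by by_contra h; simp [slice, h] at h2
      subst this
      exact ⟨k, by simpa [strip, hval] using h1, rfl⟩
  have hfin' : {k : Fin d → ℤ | x + (fun i => (k i : ℝ)) ∈ ZSpan.fundamentalDomain b}.Finite :=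
    hbij.finite_iff_finite.2 hfin
  rw [multFn, tsum_eq_finsum, stripSum, ← finsum_mem_inter_support,
    ← finsum_mem_eq_of_bijOn (f := fun _ => (1 : ℝ)) _ hbij (fun k _ => by simp [slice]),
    finsum_mem_def]
  · rfl
  · refine hfin'.subset fun k hk => ?_
    by_contra h
    exact hk (Set.indicator_of_notMem (s := ZSpan.fundamentalDomain b) h _)

/-! ### Riemann integrability of strip sums -/

lemma frontier_null (b : Module.Basis (Fin d) ℝ (Fin d → ℝ)) :
    volume (frontier (ZSpan.fundamentalDomain b)) = 0 := by
  refine Convex.addHaar_frontier volume ?_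
  have : ZSpan.fundamentalDomain b = ⋂ i, b.coord i ⁻¹' Set.Ico (0 : ℝ) 1 := by
    ext x; simp [ZSpan.mem_fundamentalDomain]
  rw [this]
  exact convex_iInter fun i => (convex_Ico (0 : ℝ) 1).linear_preimage _

lemma Tame.discontinuity_null (hf : Tame α b u f) :
    volume {x | ¬ ContinuousAt (stripSum α b f) x} = 0 := by
  set P := ZSpan.fundamentalDomain b
  refine measure_mono_null (t := ⋃ γ : ℤ × (Fin d → ℤ), (fun x => x + val α γ) ⁻¹' frontier P) ?_ ?_
  · intro x hx
    by_contra h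
    simp only [Set.mem_iUnion, Set.mem_preimage, not_exists] at h
    refine hx ?_
    obtain ⟨A, hA⟩ := hf.exists_finset (‖x‖ + 1)
    have hev : stripSum α b f =ᶠ[nhds x]
        fun y => ∑ γ ∈ A, P.indicator (fun _ => f γ) (y + val α γ) := by
      filter_upwards [Metric.ball_mem_nhds x one_pos] with y hy
      refine hA y ?_
      have := norm_le_norm_add_norm_sub' y x
      rw [mem_ball_iff_norm] at hy
      linarith
    refine ContinuousAt.congr ?_ hev.symm
    refine tendsto_finsetSum _ fun γ _ => ?_
    have h1 : ContinuousAt (P.indicator fun _ => f γ) (x + val α γ) := by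
      by_cases hi : x + val α γ ∈ interior P
      · refine (continuousAt_const (y := f γ)).congr ?_
        filter_upwards [mem_interior_iff_mem_nhds.1 hi] with y hy
        simp [hy]
      · have hc : x + val α γ ∈ (closure P)ᶜ := fun hc => h γ ⟨hc, hi⟩
        refine (continuousAt_const (y := (0 : ℝ))).congr ?_
        filter_upwards [isClosed_closure.isOpen_compl.mem_nhds hc] with y hy
        rw [Set.indicator_of_notMem fun h => hy (subset_closure h)]
    exact ContinuousAt.comp (f := fun y => y + val α γ) h1 (by fun_prop)
  · refine measure_iUnion_null fun γ => ?_
    rw [measure_preimage_add_right]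
    exact frontier_null b

lemma Tame.bounded (hf : Tame α b u f) (R : ℝ) :
    ∃ M, ∀ x : Fin d → ℝ, ‖x‖ ≤ R → |stripSum α b f x| ≤ M := by
  obtain ⟨A, hA⟩ := hf.exists_finset R
  refine ⟨∑ γ ∈ A, |f γ|, fun x hx => ?_⟩
  rw [hA x hx]
  refine (Finset.abs_sum_le_sum_abs _ _).trans (Finset.sum_le_sum fun γ _ => ?_)
  by_cases h : x + val α γ ∈ ZSpan.fundamentalDomain b <;> simp [h]

/-! ### The mean of the multiplicity function -/

/-- The unit cube `[0, 1)^d`. -/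
def cube (d : ℕ) : Set (Fin d → ℝ) := ZSpan.fundamentalDomain (Pi.basisFun ℝ (Fin d))

lemma mem_cube {x : Fin d → ℝ} : x ∈ cube d ↔ ∀ i, x i ∈ Set.Ico (0 : ℝ) 1 := by
  simp [cube, ZSpan.mem_fundamentalDomain]

lemma volume_cube : volume (cube d) = 1 := by
  rw [cube, ZSpan.volume_fundamentalDomain]
  have : Matrix.of ⇑(Pi.basisFun ℝ (Fin d)) = 1 := by
    ext i j; simp [Matrix.one_apply, Pi.single_apply, eq_comm]
  simp [this]

lemma norm_le_of_mem_cube {x : Fin d → ℝ} (hx : x ∈ cube d) : ‖x‖ ≤ 1 := by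
  rw [pi_norm_le_iff_of_nonneg zero_le_one]
  intro i
  have := mem_cube.1 hx i
  rw [Real.norm_eq_abs, abs_of_nonneg this.1]
  exact this.2.le

lemma measurableSet_cube : MeasurableSet (cube d) := ZSpan.fundamentalDomain_measurableSet _

/-- The mean of the multiplicity function over the unit cube is the volume of the set. -/
lemma integral_multFn {S : Set (Fin d → ℝ)} (hS : MeasurableSet S) (hfin : volume S ≠ ⊤) :
    ∫ x in cube d, multFn S x = (volume S).toReal := by
  have hfd := ZSpan.isAddFundamentalDomain' (Pi.basisFun ℝ (Fin d)) volume
  let e : (Fin d → ℤ) ≃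
      (Submodule.span ℤ (Set.range (Pi.basisFun ℝ (Fin d)))).toAddSubgroup :=
    ((Pi.basisFun ℝ (Fin d)).restrictScalars ℤ).equivFun.symm.toEquiv
  have hcount : Countable (Submodule.span ℤ (Set.range (Pi.basisFun ℝ (Fin d)))).toAddSubgroup :=
    e.countable_iff.1 inferInstance
  have he : ∀ k x, (e k +ᵥ x : Fin d → ℝ) = x + fun i => (k i : ℝ) := by
    intro k x
    rw [AddSubgroup.vadd_def, vadd_eq_add, add_comm]
    congr 1
    ext i
    simp [e, Module.Basis.equivFun_symm_apply, Pi.single_apply]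
  have hmeas : ∀ k : Fin d → ℤ, Measurable fun x : Fin d → ℝ =>
      S.indicator (fun _ => (1 : ℝ)) (x + fun i => (k i : ℝ)) := fun k =>
    (measurable_const.indicator hS).comp (measurable_add_const _)
  have h1 : volume S = ∑' k : Fin d → ℤ, ∫⁻ x in cube d,
      ‖S.indicator (fun _ => (1 : ℝ)) (x + fun i => (k i : ℝ))‖ₑ := by
    have h := hfd.lintegral_eq_tsum'' (S.indicator 1)
    rw [lintegral_indicator_one hS, ← e.tsum_eq] at h
    rw [h]
    refine tsum_congr fun k => lintegral_congr fun x => ?_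
    rw [he]
    by_cases hx : (x + fun i => (k i : ℝ)) ∈ S <;> simp [hx]
  have h2 : (volume S).toReal = ∑' k : Fin d → ℤ, ∫ x in cube d,
      S.indicator (fun _ => (1 : ℝ)) (x + fun i => (k i : ℝ)) := by
    have hi : Integrable (S.indicator fun _ => (1 : ℝ)) volume :=
      (integrable_indicator_iff hS).2 (integrableOn_const hfin)
    have h := hfd.integral_eq_tsum'' _ hi
    rw [integral_indicator_const _ hS, ← e.tsum_eq] at h
    simp only [he, smul_eq_mul, mul_one] at h
    exact h
  rw [h2]
  exact integral_tsum (fun k => (hmeas k).aestronglyMeasurable) (h1 ▸ hfin)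

lemma multFn_preimage (S : Set (Fin d → ℝ)) (x y : Fin d → ℝ) :
    multFn S (x + y) = multFn ((fun z => z + y) ⁻¹' S) x := by
  unfold multFn
  refine tsum_congr fun k => ?_
  rw [add_right_comm]
  rfl

lemma integrableOn_multFn (b : Module.Basis (Fin d) ℝ (Fin d → ℝ)) (y : Fin d → ℝ) :
    IntegrableOn (fun x => multFn (ZSpan.fundamentalDomain b) (x + y)) (cube d) := by
  obtain ⟨A, hA⟩ := (tame_slice (α := 0) (b := b) (u := 0)).exists_finset (1 + ‖y‖)
  have : IntegrableOn (fun x => ∑ γ ∈ A,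
      (ZSpan.fundamentalDomain b).indicator (fun _ => slice γ) (x + y + val 0 γ)) (cube d) := by
    refine integrable_finsetSum _ fun γ _ => ?_
    refine Measure.integrableOn_of_bounded (M := |slice γ|) (by simp [volume_cube]) ?_ ?_
    · exact ((measurable_const.indicator (ZSpan.fundamentalDomain_measurableSet b)).comp
        ((measurable_add_const _).comp (measurable_add_const _))).aestronglyMeasurable
    · refine Filter.Eventually.of_forall fun x => ?_
      by_cases h : x + y + val 0 γ ∈ ZSpan.fundamentalDomain b <;> simp [h]
  refine this.congr_fun (fun x hx => ?_) measurableSet_cube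
  simp only
  rw [multFn_eq (α := 0), hA]
  exact (norm_add_le _ _).trans (by linarith [norm_le_of_mem_cube hx])

/-- If the Birkhoff sums of `χ_P - c` along translates by `α` are bounded, then `c` is the volume
of `P`: integrating over the unit cube bounds `n (Leb P - c)` uniformly in `n`. -/
lemma const_eq_volume {c M : ℝ}
    (h : ∀ (n : ℕ) (x : Fin d → ℝ), |(∑ k ∈ Finset.range n,
      multFn (ZSpan.fundamentalDomain b) (x + (k : ℝ) • α)) - n * c| ≤ M) :
    c = (volume (ZSpan.fundamentalDomain b)).toReal := by
  set P := ZSpan.fundamentalDomain b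
  set V := (volume P).toReal
  have hP : MeasurableSet P := ZSpan.fundamentalDomain_measurableSet b
  have hfin : volume P ≠ ⊤ := (ZSpan.fundamentalDomain_isBounded b).measure_lt_top.ne
  have hint : ∀ y : Fin d → ℝ, IntegrableOn (fun x => multFn P (x + y)) (cube d) := fun y =>
    integrableOn_multFn b y
  have hmean : ∀ y : Fin d → ℝ, ∫ x in cube d, multFn P (x + y) = V := by
    intro y
    simp only [multFn_preimage P _ y]
    rw [integral_multFn (measurable_add_const y hP) (by rwa [measure_preimage_add_right]),
      measure_preimage_add_right]
  have hn : ∀ n : ℕ, |n * (V - c)| ≤ M := by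
    intro n
    have h1 := norm_setIntegral_le_of_norm_le_const (μ := volume) (s := cube d)
      (f := fun x => (∑ k ∈ Finset.range n, multFn P (x + (k : ℝ) • α)) - n * c) (C := M)
      (by simp [volume_cube]) (fun x _ => h n x)
    rw [integral_sub (integrable_finsetSum _ fun k _ => hint _)
      (integrableOn_const (by simp [volume_cube])),
      integral_finsetSum _ fun k _ => hint _] at h1
    simp only [hmean, setIntegral_const, Measure.real, volume_cube] at h1
    simpa [mul_sub] using h1
  by_contra hne
  have hpos : 0 < |V - c| := abs_pos.2 fun h0 => hne (sub_eq_zero.1 h0).symm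
  obtain ⟨n, hn'⟩ := exists_nat_gt (M / |V - c|)
  rw [div_lt_iff₀ hpos] at hn'
  have := hn n
  rw [abs_mul, Nat.abs_cast] at this
  linarith

/-! ### Periodicity -/

/-- The periodic correction: translating by `p ∈ ℤ^d` changes `stripSum (wt)` by a constant, which
depends additively on `p` and hence extends to a linear functional on `ℝ^d`; adding that functional
makes the sum `ℤ^d`-periodic. -/
lemma exists_linear (hu : ∀ k, val α (u k) = b k) :
    ∃ l : (Fin d → ℝ) →L[ℝ] ℝ, ∀ (x : Fin d → ℝ) (p : Fin d → ℤ),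
      stripSum α b (wt α b u) (x + fun i => (p i : ℝ)) + l (x + fun i => (p i : ℝ)) =
        stripSum α b (wt α b u) x + l x := by
  set G := stripSum α b (wt α b u)
  set F : (Fin d → ℤ) → ℝ := fun p => stripSum α b (jump α b u (0, p)) 0
  have hG : ∀ (p : Fin d → ℤ) (x), G (x - fun i => (p i : ℝ)) = G x - F p := fun p x =>
    (stripSum_wt_int p x).trans (by rw [stripSum_jump hu (0, p) x 0])
  let Fh : (Fin d → ℤ) →+ ℝ := AddMonoidHom.mk' F fun p p' => by
    have h1 := hG p 0
    have h2 := hG p' (0 - fun i => (p i : ℝ))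
    have h3 := hG (p + p') 0
    have : (0 - (fun i => (p i : ℝ)) - fun i => (p' i : ℝ)) =
        (0 - fun i => ((p + p') i : ℝ) : Fin d → ℝ) := by
      ext i; simp; ring
    rw [this] at h2
    linarith
  let l : (Fin d → ℝ) →ₗ[ℝ] ℝ :=
    -(Pi.basisFun ℝ (Fin d)).constr ℝ fun i => F (Pi.single i 1)
  have hl : ∀ p : Fin d → ℤ, l (fun i => (p i : ℝ)) = -F p := by
    intro p
    have : Fh p = ∑ i, (p i : ℝ) * F (Pi.single i 1) := by
      conv_lhs => rw [← Finset.univ_sum_single p]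
      rw [map_sum]
      refine Finset.sum_congr rfl fun i _ => ?_
      have : Pi.single i (p i) = p i • (Pi.single i 1 : Fin d → ℤ) := by
        rw [← Pi.single_smul]; simp
      rw [this, map_zsmul, zsmul_eq_mul]
      rfl
    change _ = -Fh p
    rw [this]
    simp [l, Module.Basis.constr_apply_fintype]
  refine ⟨LinearMap.toContinuousLinearMap l, fun x p => ?_⟩
  have h1 := hG p (x + fun i => (p i : ℝ))
  rw [add_sub_cancel_right] at h1
  rw [LinearMap.coe_toContinuousLinearMap', map_add, hl, h1]
  ring

lemma paral_eq (b : Module.Basis (Fin d) ℝ (Fin d → ℝ)) :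
    paral b = ZSpan.fundamentalDomain b := by
  ext x
  constructor
  · rintro ⟨t, ht, rfl⟩ k
    rw [b.repr_sum_self]
    exact ht k
  · intro h
    exact ⟨fun k => b.repr x k, h, (b.sum_repr x).symm⟩

end BRS

/-- A parallelepiped spanned by linearly independent vectors in `ℤα + ℤ^d`
is a bounded remainder set with respect to `α`, and it admits a Riemann integrable
transfer function. -/
theorem stmt0 {d : ℕ} (hd : 1 ≤ d) (α : Fin d → ℝ) (hα : IsIrrationalVector α)
    (v : Fin d → Fin d → ℝ) (hli : LinearIndependent ℝ v) (hv : ∀ k, v k ∈ lat α) :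
    IsBRS α (paral v) ∧
      ∃ g : (Fin d → ℝ) → ℝ, IsTransfer α (paral v) g ∧ RiemannIntegrableFn g := by
  have : Nonempty (Fin d) := ⟨⟨0, hd⟩⟩
  let b := basisOfLinearIndependentOfCardEqFinrank hli (by simp)
  have hb : v = b := (coe_basisOfLinearIndependentOfCardEqFinrank hli (by simp)).symm
  have hex : ∀ k, ∃ γ, BRS.val α γ = b k := by
    intro k
    obtain ⟨q, p, h⟩ := hv k
    exact ⟨(q, p), by rw [← hb, h]; rfl⟩
  choose u hu using hex
  rw [hb, BRS.paral_eq]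
  obtain ⟨l, hl⟩ := BRS.exists_linear hu
  set P := ZSpan.fundamentalDomain b
  let g : (Fin d → ℝ) → ℝ := fun x => BRS.stripSum α b (BRS.wt α b u) x + l x
  have hper : IsZdPeriodic g := hl
  have hcob : ∀ x, multFn P x - (-BRS.stripSum α b (BRS.jump α b u (1, 0)) 0 - l α) =
      g x - g (x - α) := by
    intro x
    simp only [g]
    rw [BRS.stripSum_wt_sub, BRS.multFn_eq (α := α), BRS.stripSum_jump hu _ x 0, map_sub]
    ring
  set c := -BRS.stripSum α b (BRS.jump α b u (1, 0)) 0 - l α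
  obtain ⟨M, hM⟩ : ∃ M : ℝ, ∀ x, |g x| ≤ M := by
    obtain ⟨M, hM⟩ := (BRS.tame_wt (α := α) (b := b) (u := u)).bounded 1
    refine ⟨M + ‖l‖, fun x => ?_⟩
    -- reduce to the unit cube by periodicity
    have hx : (fun i => Int.fract (x i)) + (fun i => (⌊x i⌋ : ℝ)) = x := by
      ext i; exact Int.fract_add_floor _
    have hn : ‖fun i => Int.fract (x i)‖ ≤ 1 := BRS.norm_le_of_mem_cube
      (BRS.mem_cube.2 fun i => ⟨Int.fract_nonneg _, Int.fract_lt_one _⟩)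
    rw [← hx, hper]
    refine (abs_add_le _ _).trans (add_le_add (hM _ hn) ?_)
    exact (l.le_opNorm _).trans (mul_le_of_le_one_right (norm_nonneg _) hn)
  have hsum : ∀ (n : ℕ) (x : Fin d → ℝ),
      |(∑ k ∈ Finset.range n, multFn P (x + (k : ℝ) • α)) - n * c| ≤ 2 * M := by
    intro n x
    have : (∑ k ∈ Finset.range n, multFn P (x + (k : ℝ) • α)) - n * c =
        g (x + (n : ℝ) • α - α) - g (x - α) := by
      induction n with
      | zero => simp
      | succ n ih =>
        have h1 := hcob (x + (n : ℝ) • α)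
        have h2 : x + ((n + 1 : ℕ) : ℝ) • α - α = x + (n : ℝ) • α := by
          push_cast; rw [add_smul, one_smul]; abel
        rw [Finset.sum_range_succ, h2]
        push_cast
        linarith
    rw [this]
    refine (abs_sub _ _).trans ?_
    linarith [hM (x + (n : ℝ) • α - α), hM (x - α)]
  have hc : c = (volume P).toReal := BRS.const_eq_volume hsum
  rw [hc] at hsum hcob
  refine ⟨⟨2 * M, Filter.Eventually.of_forall fun x n _ => hsum n x⟩, g,
    ⟨hper, Filter.Eventually.of_forall hcob⟩, ⟨M, hM⟩, ?_⟩
  refine measure_mono_null (fun x hx => ?_)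
    (BRS.tame_wt (α := α) (b := b) (u := u)).discontinuity_null
  exact fun hc => hx <| hc.add l.continuous.continuousAt
end

section
/- Let α be an irrational vector in ℝ^d and let v₁, …, v_N be vectors in ℝ^d each belonging to ℤα + ℤ^d. Then the zonotope Z = {∑_{i=1}^N t_i v_i : 0 ≤ t_i ≤ 1} (the Minkowski sum of the segments [0, v_i]) is a bounded remainder set with respect to α. In particular, any convex centrally symmetric polygon in ℝ² with vertices in ℤα + ℤ², and more generally any zonotope in ℝ^d with vertices in ℤα + ℤ^d, is a bounded remainder set. -/
/-!
The zonotope is cut into parallelepipeds spanned by vectors of `ℤα + ℤ^d`, and each of these has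
bounded remainder for arithmetic reasons.

*Parallelepipeds.* Let `b` be a basis of `ℝ^d` consisting of vectors `b i = q i α + p i` of
`ℤα + ℤ^d`, let `F` be its half-open fundamental domain, and let `ℓ` be the linear functional with
`ℓ (b i) = q i`. The homomorphism `φ (k, p) = k - ℓ (kα + p)` kills all the `(q i, p i)`. For an
orbit point `x + kα + p` lying in `F`, `φ (k, p)` differs from `k + ℓ x` by a bounded amount. So
counting visits with `0 ≤ k < n` is, up to boundedly many, the same as counting visits with `φ` in
a window of length `n`. If `φ m₀ = T > 0`, the visits with `φ` in a window of length `T` form a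
system of representatives modulo the subgroup generated by `m₀` and the `(q i, p i)`, so their
number does not depend on the window (`ncard_window`). This gives a count `c n + O(1)`, for every
starting point `x` (`paral_rem`).

*Tiling.* Fix a cost functional on parameters `t ∈ [0, 1]^N` which is generic with respect to the
linear relations between the generators. For a point of the zonotope off finitely many proper affine
subspaces, the generators at which an optimal parameter is fractional form a basis `B`, and every
other coordinate is `0` or `1` according to the sign of its reduced cost relative to `B`. Hence the
point lies in the translate of the parallelepiped of `B` by a vector depending only on `B`
(`opt_tile`). Conversely each point of such a translate, off those subspaces, has a unique optimal
parameter, with fractional set `B` (`tile_opt`). So the tiles cover the zonotope exactly once almost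
everywhere (`zono_tiling`), and the remainders add up (`isBRS_zono`).

*The constant.* Integrating over the torus shows that a frequency with bounded remainder can only be
the volume (`isBRS_of_rem`).

*Vertices in `ℤα + ℤ^d`.* Merging parallel generators changes the zonotope by a translation only
(`merge`). Once no two generators are parallel, each of them joins the two ends of an edge, which
are vertices (`exists_edge`), so it lies in `ℤα + ℤ^d` as a difference of two elements of this group.
-/

open MeasureTheory

/-! ### Visits to parallelepipeds -/

/-- The point `kα + p` of `ℤα + ℤ^d` with coordinates `m = (k, p)`. Orbit visits are counted by
pairs `(k, p)`. -/
noncomputable def latPt {d : ℕ} (α : Fin d → ℝ) : ℤ × (Fin d → ℤ) →+ (Fin d → ℝ) where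
  toFun m := (m.1 : ℝ) • α + fun i => (m.2 i : ℝ)
  map_zero' := by ext i; simp
  map_add' m m' := by ext i; simp; ring

lemma latPt_apply {d : ℕ} (α : Fin d → ℝ) (m : ℤ × (Fin d → ℤ)) :
    latPt α m = (m.1 : ℝ) • α + fun i => (m.2 i : ℝ) := rfl

lemma multFn_eq_ncard {d : ℕ} (S : Set (Fin d → ℝ)) (y : Fin d → ℝ) :
    multFn S y = ({p : Fin d → ℤ | y + (fun i => (p i : ℝ)) ∈ S}.ncard : ℝ) := by
  have h : (fun k : Fin d → ℤ => Set.indicator S (fun _ => (1 : ℝ)) (y + fun i => (k i : ℝ)))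
      = Set.indicator {p : Fin d → ℤ | y + (fun i => (p i : ℝ)) ∈ S} (fun _ => (1 : ℝ)) := by
    ext k; simp [Set.indicator]
  rw [multFn, h, ← tsum_subtype, tsum_const]
  rw [Nat.card_coe_set_eq, nsmul_eq_mul, mul_one]

lemma finite_latPt {d : ℕ} (α x : Fin d → ℝ) {S : Set (Fin d → ℝ)}
    (hS : Bornology.IsBounded S) (A : ℝ) :
    {m : ℤ × (Fin d → ℤ) | |(m.1 : ℝ)| ≤ A ∧ x + latPt α m ∈ S}.Finite := by
  obtain ⟨B, hB⟩ := hS.exists_norm_le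
  set D : ℝ := B + ‖x‖ + A * ‖α‖ with hD
  refine ((Set.finite_Icc (-⌈A⌉) ⌈A⌉).prod
    (Set.finite_Icc (fun _ : Fin d => -⌈D⌉) (fun _ => ⌈D⌉))).subset ?_
  rintro ⟨k, p⟩ ⟨hk, hm⟩
  have h1 : ‖(fun i => (p i : ℝ) : Fin d → ℝ)‖ ≤ D := by
    have e : (fun i => (p i : ℝ) : Fin d → ℝ) = (x + latPt α (k, p)) - x - (k : ℝ) • α := by
      rw [latPt_apply]; ext i; simp
    rw [e]
    refine (norm_sub_le _ _).trans ?_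
    have h2 := norm_sub_le (x + latPt α (k, p)) x
    have h3 := hB _ hm
    have h4 : ‖(k : ℝ) • α‖ ≤ A * ‖α‖ := by
      rw [norm_smul, Real.norm_eq_abs]
      exact mul_le_mul_of_nonneg_right hk (norm_nonneg _)
    linarith
  have h5 : ∀ i, |(p i : ℝ)| ≤ D := fun i => (norm_le_pi_norm (fun i => (p i : ℝ)) i).trans h1
  have key : ∀ (z : ℤ) (r : ℝ), |(z : ℝ)| ≤ r → -⌈r⌉ ≤ z ∧ z ≤ ⌈r⌉ := by
    intro z r h
    have := abs_le.1 (h.trans (Int.le_ceil r))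
    constructor
    · exact_mod_cast this.1
    · exact_mod_cast this.2
  exact ⟨key _ _ hk, fun i => (key _ _ (h5 i)).1, fun i => (key _ _ (h5 i)).2⟩

/-- Birkhoff sums count the pairs `(k, p)` with `0 ≤ k < n` for which `x + kα + p` lands in `S`. -/
lemma sum_multFn_eq_ncard {d : ℕ} (α x : Fin d → ℝ) {S : Set (Fin d → ℝ)}
    (hS : Bornology.IsBounded S) (n : ℕ) :
    ∑ k ∈ Finset.range n, multFn S (x + (k : ℝ) • α) =
      ({m : ℤ × (Fin d → ℤ) | (0 ≤ m.1 ∧ m.1 < n) ∧ x + latPt α m ∈ S}.ncard : ℝ) := by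
  induction n with
  | zero =>
    have : {m : ℤ × (Fin d → ℤ) | (0 ≤ m.1 ∧ m.1 < (0 : ℕ)) ∧ x + latPt α m ∈ S} = ∅ := by
      ext m; simp
    rw [this]; simp
  | succ n ih =>
    have hfin : ∀ n : ℕ,
        {m : ℤ × (Fin d → ℤ) | (0 ≤ m.1 ∧ m.1 < n) ∧ x + latPt α m ∈ S}.Finite := by
      intro n
      refine (finite_latPt α x hS n).subset ?_
      rintro m ⟨⟨h0, h1⟩, h2⟩
      refine ⟨?_, h2⟩
      rw [abs_of_nonneg (by exact_mod_cast h0)]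
      exact_mod_cast h1.le
    rw [Finset.sum_range_succ, ih, multFn_eq_ncard]
    have e : {m : ℤ × (Fin d → ℤ) | (0 ≤ m.1 ∧ m.1 < (n + 1 : ℕ)) ∧ x + latPt α m ∈ S} =
        {m : ℤ × (Fin d → ℤ) | (0 ≤ m.1 ∧ m.1 < n) ∧ x + latPt α m ∈ S} ∪
        (fun p => ((n : ℤ), p)) '' {p : Fin d → ℤ | x + (n : ℝ) • α + (fun i => (p i : ℝ)) ∈ S} := by
      ext ⟨k, p⟩
      simp only [Set.mem_ofPred_eq, Set.mem_union, Set.mem_image, Prod.mk.injEq, latPt_apply]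
      constructor
      · rintro ⟨⟨h0, h1⟩, h2⟩
        by_cases hk : k < n
        · exact Or.inl ⟨⟨h0, hk⟩, h2⟩
        · have : k = n := by push_cast at h1; omega
          subst this
          exact Or.inr ⟨p, by simpa [add_assoc] using h2, rfl, rfl⟩
      · rintro (⟨⟨h0, h1⟩, h2⟩ | ⟨p', h, rfl, rfl⟩)
        · exact ⟨⟨h0, by push_cast; omega⟩, h2⟩
        · exact ⟨⟨by positivity, by push_cast; omega⟩, by simpa [add_assoc] using h⟩
    have hf2 : ((fun p => ((n : ℤ), p)) ''
        {p : Fin d → ℤ | x + (n : ℝ) • α + (fun i => (p i : ℝ)) ∈ S}).Finite :=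
      (hfin (n + 1)).subset (e ▸ Set.subset_union_right)
    rw [e, Set.ncard_union_eq ?_ (hfin n) hf2, Set.ncard_image_of_injective]
    · push_cast; rfl
    · intro p q h; simpa using h
    · rw [Set.disjoint_left]
      rintro m ⟨⟨_, h⟩, _⟩ ⟨p, _, rfl⟩
      exact absurd h (lt_irrefl _)

/-- Core of the argument for parallelepipeds. The basis vectors are `latPt α (u i)`, and `φ` is an
additive functional killing every `u i`, with `φ m₀ = T > 0`. The points `m` landing in the
parallelepiped with `φ m` in a window of length `T` are coset representatives of the subgroup
generated by `m₀` and the `u i`, so their number is the index of that subgroup. -/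
lemma ncard_window {d : ℕ} {ι : Type*} [Fintype ι] (α : Fin d → ℝ)
    (b : Module.Basis ι ℝ (Fin d → ℝ)) (u : ι → ℤ × (Fin d → ℤ)) (hu : ∀ i, b i = latPt α (u i))
    (φ : ℤ × (Fin d → ℤ) →+ ℝ) (hφu : ∀ i, φ (u i) = 0) (m₀ : ℤ × (Fin d → ℤ))
    (hT : 0 < φ m₀) :
    ∃ K : ℕ, ∀ (x : Fin d → ℝ) (a : ℝ),
      {m | x + latPt α m ∈ ZSpan.fundamentalDomain b ∧ φ m ∈ Set.Ico a (a + φ m₀)}.ncard = K := by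
  classical
  let R : AddSubgroup (ℤ × (Fin d → ℤ)) :=
    AddSubgroup.closure (Set.range u) ⊔ AddSubgroup.zmultiples m₀
  have hR : ∀ m, m ∈ R ↔ ∃ (n : ι → ℤ) (j : ℤ), ∑ i, n i • u i + j • m₀ = m := by
    intro m
    have hc : ∀ y, y ∈ AddSubgroup.closure (Set.range u) ↔ ∃ n : ι → ℤ, ∑ i, n i • u i = y := by
      intro y
      rw [← Submodule.span_int_eq_addSubgroupClosure, Submodule.mem_toAddSubgroup,
        Submodule.mem_span_range_iff_exists_fun]
    rw [AddSubgroup.mem_sup]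
    constructor
    · rintro ⟨y, hy, z, hz, rfl⟩
      obtain ⟨n, rfl⟩ := (hc y).1 hy
      obtain ⟨j, rfl⟩ := AddSubgroup.mem_zmultiples_iff.1 hz
      exact ⟨n, j, rfl⟩
    · rintro ⟨n, j, rfl⟩
      exact ⟨_, (hc _).2 ⟨n, rfl⟩, _, AddSubgroup.mem_zmultiples_iff.2 ⟨j, rfl⟩, rfl⟩
  have hφR : ∀ (n : ι → ℤ) (j : ℤ), φ (∑ i, n i • u i + j • m₀) = j * φ m₀ := by
    intro n j
    simp only [map_add, map_sum, map_zsmul, hφu, smul_zero, Finset.sum_const_zero, zero_add]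
    rw [zsmul_eq_mul]
  have hrepr : ∀ (n : ι → ℤ) (i : ι), b.repr (latPt α (∑ i, n i • u i)) i = n i := by
    intro n i
    have : latPt α (∑ i, n i • u i) = ∑ i, (n i : ℝ) • b i := by
      simp only [map_sum, map_zsmul, ← hu, Int.cast_smul_eq_zsmul]
    rw [this, b.repr_sum_self]
  refine ⟨Nat.card ((ℤ × (Fin d → ℤ)) ⧸ R), fun x a => ?_⟩
  rw [← Nat.card_coe_set_eq]
  refine Nat.card_congr (Equiv.ofBijective (fun m => (QuotientAddGroup.mk m.1 : _ ⧸ R)) ⟨?_, ?_⟩)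
  · rintro ⟨m, hm1, hm2⟩ ⟨m', hm1', hm2'⟩ h
    obtain ⟨n, j, hnj⟩ := (hR _).1 (QuotientAddGroup.eq.1 h)
    have hm' : m' = m + (∑ i, n i • u i + j • m₀) := by rw [hnj]; abel
    have hj : j = 0 := by
      have e : φ m' = φ m + j * φ m₀ := by rw [hm', map_add, hφR]
      have l1 : (j : ℝ) * φ m₀ < 1 * φ m₀ := by linarith [hm2.1, hm2'.2]
      have l2 : (-1) * φ m₀ < (j : ℝ) * φ m₀ := by linarith [hm2.2, hm2'.1]
      have l3 := lt_of_mul_lt_mul_right l1 hT.le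
      have l4 := lt_of_mul_lt_mul_right l2 hT.le
      have l5 : j < 1 := by exact_mod_cast l3
      have l6 : -1 < j := by exact_mod_cast l4
      omega
    subst hj
    have hn : n = 0 := by
      funext i
      have e : b.repr (x + latPt α m') i = b.repr (x + latPt α m) i + n i := by
        rw [hm', zero_smul, add_zero, map_add (latPt α), ← add_assoc, map_add b.repr,
          Finsupp.add_apply, hrepr]
      have h1 := (ZSpan.mem_fundamentalDomain b).1 hm1 i
      have h2 := (ZSpan.mem_fundamentalDomain b).1 hm1' i
      have l1 : (n i : ℝ) < 1 := by linarith [h1.1, h2.2]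
      have l2 : (-1 : ℝ) < n i := by linarith [h1.2, h2.1]
      have l5 : n i < 1 := by exact_mod_cast l1
      have l6 : -1 < n i := by exact_mod_cast l2
      simp only [Pi.zero_apply]; omega
    subst hn
    simpa using hm'.symm
  · intro q
    obtain ⟨g, rfl⟩ := QuotientAddGroup.mk_surjective q
    obtain ⟨j, hj, -⟩ := existsUnique_add_zsmul_mem_Ico hT (φ g) a
    let n : ι → ℤ := fun i => -⌊b.repr (x + latPt α (g + j • m₀)) i⌋
    refine ⟨⟨g + (∑ i, n i • u i + j • m₀), ?_, ?_⟩, ?_⟩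
    · rw [ZSpan.mem_fundamentalDomain]
      intro i
      have e : x + latPt α (g + (∑ i, n i • u i + j • m₀)) =
          (x + latPt α (g + j • m₀)) + latPt α (∑ i, n i • u i) := by
        simp only [map_add]; abel
      rw [e, map_add, Finsupp.add_apply, hrepr]
      simp only [n]
      push_cast
      rw [← sub_eq_add_neg]
      exact ⟨Int.fract_nonneg _, Int.fract_lt_one _⟩
    · rw [map_add, hφR]
      simpa using hj
    · refine (QuotientAddGroup.eq.2 ((hR _).2 ⟨n, j, ?_⟩)).symm
      simp

/-- Parallelepipeds spanned by vectors of `ℤα + ℤ^d` have bounded remainder, pointwise and with a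
constant that need not yet be identified with the volume. -/
lemma paral_rem {d : ℕ} {ι : Type*} [Fintype ι] (α : Fin d → ℝ)
    (b : Module.Basis ι ℝ (Fin d → ℝ)) (hb : ∀ i, b i ∈ lat α) :
    ∃ c C : ℝ, ∀ (x : Fin d → ℝ) (n : ℕ),
      |∑ k ∈ Finset.range n, multFn (ZSpan.fundamentalDomain b) (x + (k : ℝ) • α) - c * n| ≤ C := by
  classical
  have hFb : Bornology.IsBounded (ZSpan.fundamentalDomain b) := ZSpan.fundamentalDomain_isBounded b
  choose q p hqp using hb
  let u : ι → ℤ × (Fin d → ℤ) := fun i => (q i, p i)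
  let ℓ : (Fin d → ℝ) →ₗ[ℝ] ℝ := b.constr ℝ (fun i => (q i : ℝ))
  -- `φ (k, p) = k - ℓ (kα + p)`: on the points landing in a bounded set it is `k` up to `O(1)`
  let φ : ℤ × (Fin d → ℤ) →+ ℝ :=
    ((Int.castAddHom ℝ).comp (AddMonoidHom.fst _ _)) - ℓ.toAddMonoidHom.comp (latPt α)
  have hφ : ∀ m, φ m = (m.1 : ℝ) - ℓ (latPt α m) := fun m => rfl
  have hu : ∀ i, b i = latPt α (u i) := fun i => hqp i
  have hφu : ∀ i, φ (u i) = 0 := by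
    intro i
    rw [hφ, ← hu]
    simp [ℓ, u]
  -- `φ ≠ 0`: if it vanished then `ℓ` would vanish on `ℤ^d`, so `ℓ = 0` and `φ (1, 0) = 1`
  obtain ⟨m₀, hT⟩ : ∃ m₀, 0 < φ m₀ := by
    by_contra! hneg
    have h0 : ∀ m, φ m = 0 := by
      intro m
      refine le_antisymm (hneg m) ?_
      have := hneg (-m)
      rw [map_neg] at this; linarith
    have hℓ : ℓ = 0 := by
      refine (Pi.basisFun ℝ (Fin d)).ext fun i => ?_
      have := h0 (0, Pi.single i 1)
      rw [hφ] at this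
      have e : latPt α (0, Pi.single i 1) = Pi.basisFun ℝ (Fin d) i := by
        rw [latPt_apply]; ext j; by_cases h : j = i <;> simp [Pi.single_apply, h]
      rw [e] at this
      simpa using this
    have := h0 (1, 0)
    rw [hφ, hℓ] at this
    simp at this
  obtain ⟨K, hK⟩ := ncard_window α b u hu φ hφu m₀ hT
  set T := φ m₀ with hTdef
  obtain ⟨B, hB⟩ := hFb.exists_norm_le
  obtain ⟨C, hC0, hC⟩ : ∃ C : ℝ, 0 ≤ C ∧ ∀ y ∈ ZSpan.fundamentalDomain b, |ℓ y| ≤ C := by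
    refine ⟨‖LinearMap.toContinuousLinearMap ℓ‖ * |B|, by positivity, fun y hy => ?_⟩
    have := (LinearMap.toContinuousLinearMap ℓ).le_opNorm y
    rw [← Real.norm_eq_abs]
    refine this.trans (mul_le_mul_of_nonneg_left ?_ (norm_nonneg _))
    exact (hB y hy).trans (le_abs_self B)
  have hfin : ∀ (x : Fin d → ℝ) (a e : ℝ),
      {m | x + latPt α m ∈ ZSpan.fundamentalDomain b ∧ φ m ∈ Set.Ico a e}.Finite := by
    intro x a e
    refine (finite_latPt α x hFb (|a| + |e| + |ℓ x| + C)).subset ?_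
    rintro m ⟨h1, h2, h3⟩
    refine ⟨?_, h1⟩
    have h4 := abs_le.1 (hC _ h1)
    rw [map_add] at h4
    rw [hφ] at h2 h3
    rw [abs_le]
    constructor <;>
      linarith [abs_le.1 (le_refl |a|), abs_le.1 (le_refl |e|), abs_le.1 (le_refl |ℓ x|),
        neg_abs_le a, le_abs_self e, neg_abs_le (ℓ x), le_abs_self (ℓ x), abs_nonneg a,
        abs_nonneg e]
  have hmany : ∀ (x : Fin d → ℝ) (a : ℝ) (j : ℕ),
      {m | x + latPt α m ∈ ZSpan.fundamentalDomain b ∧ φ m ∈ Set.Ico a (a + j * T)}.ncard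
        = j * K := by
    intro x a j
    induction j with
    | zero => simp
    | succ j ih =>
      have e : {m | x + latPt α m ∈ ZSpan.fundamentalDomain b ∧
            φ m ∈ Set.Ico a (a + (j + 1 : ℕ) * T)} =
          {m | x + latPt α m ∈ ZSpan.fundamentalDomain b ∧ φ m ∈ Set.Ico a (a + j * T)} ∪
          {m | x + latPt α m ∈ ZSpan.fundamentalDomain b ∧
            φ m ∈ Set.Ico (a + j * T) (a + j * T + T)} := by
        have h1 : Set.Ico a (a + (j + 1 : ℕ) * T) =
            Set.Ico a (a + j * T) ∪ Set.Ico (a + j * T) (a + j * T + T) := by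
          rw [Set.Ico_union_Ico_eq_Ico]
          · congr 1; push_cast; ring
          · have : 0 ≤ (j : ℝ) * T := by positivity
            linarith
          · linarith
        rw [h1]; ext m; simp only [Set.mem_ofPred_eq, Set.mem_union]; tauto
      rw [e, Set.ncard_union_eq ?_ (hfin _ _ _) (hfin _ _ _), ih, hK]
      · ring
      · rw [Set.disjoint_left]
        rintro m ⟨_, h1⟩ ⟨_, h2⟩
        exact absurd h1.2 (not_lt.2 h2.1)
  refine ⟨K / T, K * (2 * C / T + 1), fun x n => ?_⟩
  rw [sum_multFn_eq_ncard α x hFb n]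
  have hnfin : {m : ℤ × (Fin d → ℤ) | (0 ≤ m.1 ∧ m.1 < n) ∧
      x + latPt α m ∈ ZSpan.fundamentalDomain b}.Finite := by
    refine (finite_latPt α x hFb n).subset ?_
    rintro m ⟨⟨h0, h1⟩, h2⟩
    refine ⟨?_, h2⟩
    rw [abs_of_nonneg (by exact_mod_cast h0)]
    exact_mod_cast h1.le
  have hK0 : (0 : ℝ) ≤ K := by positivity
  have ident : ∀ s : ℝ, K / T * s = K * (s / T) := fun s => by ring
  rw [abs_le]
  constructor
  · -- lower bound: the window `[ℓ x + C, ℓ x + n - C)` only contains visits with `0 ≤ k < n`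
    set j := ⌊((n : ℝ) - 2 * C) / T⌋₊ with hj
    have hsub : {m | x + latPt α m ∈ ZSpan.fundamentalDomain b ∧
        φ m ∈ Set.Ico (ℓ x + C) (ℓ x + C + j * T)} ⊆
        {m : ℤ × (Fin d → ℤ) | (0 ≤ m.1 ∧ m.1 < n) ∧ x + latPt α m ∈ ZSpan.fundamentalDomain b} := by
      rintro m ⟨h1, h2, h3⟩
      have h4 := abs_le.1 (hC _ h1)
      rw [map_add] at h4
      rw [hφ] at h2 h3
      have hjT : (j : ℝ) * T ≤ n - 2 * C := by
        rcases Nat.eq_zero_or_pos j with h | h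
        · exfalso
          rw [h] at h3; simp at h3; linarith
        · have h5 : (j : ℝ) ≤ (n - 2 * C) / T := by
            refine Nat.floor_le ?_
            by_contra hneg
            rw [hj, Nat.floor_of_nonpos (not_le.1 hneg).le] at h
            exact absurd h (lt_irrefl _)
          exact (le_div_iff₀ hT).1 h5
      refine ⟨⟨?_, ?_⟩, h1⟩
      · have : (0 : ℝ) ≤ m.1 := by linarith
        exact_mod_cast this
      · have : (m.1 : ℝ) < n := by linarith
        exact_mod_cast this
    have hle := Set.ncard_le_ncard hsub hnfin
    rw [hmany] at hle
    have hle' : (j : ℝ) * K ≤ ({m : ℤ × (Fin d → ℤ) | (0 ≤ m.1 ∧ m.1 < n) ∧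
      x + latPt α m ∈ ZSpan.fundamentalDomain b}.ncard : ℝ) := by exact_mod_cast hle
    have hjl : ((n : ℝ) - 2 * C) / T < j + 1 := Nat.lt_floor_add_one _
    have : (K : ℝ) * ((n - 2 * C) / T) ≤ K * (j + 1) := mul_le_mul_of_nonneg_left hjl.le hK0
    rw [ident]
    rw [sub_div] at this
    linarith
  · -- upper bound: every visit with `0 ≤ k < n` lies in the window `[ℓ x - C, ℓ x + n + C)`
    set j := ⌊((n : ℝ) + 2 * C) / T⌋₊ with hj
    have hjl : ((n : ℝ) + 2 * C) / T < j + 1 := Nat.lt_floor_add_one _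
    have hjT : (n : ℝ) + 2 * C < ((j + 1 : ℕ) : ℝ) * T := by
      push_cast
      exact (div_lt_iff₀ hT).1 hjl
    have hsub : {m : ℤ × (Fin d → ℤ) | (0 ≤ m.1 ∧ m.1 < n) ∧
        x + latPt α m ∈ ZSpan.fundamentalDomain b} ⊆
        {m | x + latPt α m ∈ ZSpan.fundamentalDomain b ∧
          φ m ∈ Set.Ico (ℓ x - C) (ℓ x - C + (j + 1 : ℕ) * T)} := by
      rintro m ⟨⟨h2, h3⟩, h1⟩
      have h4 := abs_le.1 (hC _ h1)
      rw [map_add] at h4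
      have h2' : (0 : ℝ) ≤ m.1 := by exact_mod_cast h2
      have h3' : (m.1 : ℝ) < n := by exact_mod_cast h3
      refine ⟨h1, ?_, ?_⟩ <;> rw [hφ] <;> linarith
    have hle := Set.ncard_le_ncard hsub (hfin _ _ _)
    rw [hmany] at hle
    have hle' : ({m : ℤ × (Fin d → ℤ) | (0 ≤ m.1 ∧ m.1 < n) ∧
      x + latPt α m ∈ ZSpan.fundamentalDomain b}.ncard : ℝ) ≤ ((j : ℝ) + 1) * K := by
      exact_mod_cast hle
    have hj0 : (j : ℝ) ≤ (n + 2 * C) / T := Nat.floor_le (by positivity)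
    have : (K : ℝ) * j ≤ K * ((n + 2 * C) / T) := mul_le_mul_of_nonneg_left hj0 hK0
    rw [ident]
    rw [add_div] at this
    linarith

/-! ### Tiling a zonotope by parallelepipeds -/

/-- Parameters `t ∈ [0,1]^N` representing the point `x` of the zonotope generated by `v`. -/
def feas {d N : ℕ} (v : Fin N → Fin d → ℝ) (x : Fin d → ℝ) : Set (Fin N → ℝ) :=
  {t | (∀ i, 0 ≤ t i ∧ t i ≤ 1) ∧ x = ∑ i, t i • v i}

/-- The zonotope `∑ᵢ [0, vᵢ]`. -/
def zono {d N : ℕ} (v : Fin N → Fin d → ℝ) : Set (Fin d → ℝ) :=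
  {x | ∃ t : Fin N → ℝ, (∀ i, 0 ≤ t i ∧ t i ≤ 1) ∧ x = ∑ i, t i • v i}

/-- `B` indexes a subfamily of `v` which is a basis of `ℝ^d`. -/
def IsBas {d N : ℕ} (v : Fin N → Fin d → ℝ) (B : Finset (Fin N)) : Prop :=
  LinearIndependent ℝ (fun i : B => v i) ∧ ⊤ ≤ Submodule.span ℝ (Set.range (fun i : B => v i))

/-- The basis of `ℝ^d` formed by the vectors `v i`, `i ∈ B`. -/
noncomputable def IsBas.basis {d N : ℕ} {v : Fin N → Fin d → ℝ} {B : Finset (Fin N)}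
    (h : IsBas v B) : Module.Basis B ℝ (Fin d → ℝ) := Module.Basis.mk h.1 h.2

lemma IsBas.basis_apply {d N : ℕ} {v : Fin N → Fin d → ℝ} {B : Finset (Fin N)}
    (h : IsBas v B) (i : B) : h.basis i = v i := by
  simp [IsBas.basis]

/-- The points lying on a translate, by a partial sum of the `v i`, of a proper subspace spanned by
some of the `v i`. -/
def wall {d N : ℕ} (v : Fin N → Fin d → ℝ) : Set (Fin d → ℝ) :=
  {x | ∃ S F : Finset (Fin N), Submodule.span ℝ (v '' F) ≠ ⊤ ∧
    x - ∑ i ∈ S, v i ∈ Submodule.span ℝ (v '' F)}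

lemma volume_wall {d N : ℕ} (v : Fin N → Fin d → ℝ) : volume (wall v) = 0 := by
  have : wall v = ⋃ S : Finset (Fin N), ⋃ F : Finset (Fin N),
      {x | Submodule.span ℝ (v '' F) ≠ ⊤ ∧
        x - ∑ i ∈ S, v i ∈ Submodule.span ℝ (v '' F)} := by
    ext x; simp [wall]
  rw [this, measure_iUnion_null_iff]
  intro S
  rw [measure_iUnion_null_iff]
  intro F
  by_cases hF : Submodule.span ℝ (v '' F) = ⊤
  · simp [hF]
  · refine measure_mono_null (t := (fun x => x - ∑ i ∈ S, v i) ⁻¹' (Submodule.span ℝ (v '' F)))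
      (fun x hx => hx.2) ?_
    simp_rw [sub_eq_add_neg]
    rw [measure_preimage_add_right]
    exact Measure.addHaar_submodule _ _ hF

/-- A cost functional on `ℝ^N` in general position with respect to the linear relations
among the `v i`: every dependent subfamily carries a relation of nonzero cost. -/
def Generic {d N : ℕ} (v : Fin N → Fin d → ℝ) (c : Module.Dual ℝ (Fin N → ℝ)) : Prop :=
  ∀ F : Finset (Fin N), ¬ LinearIndependent ℝ (fun i : F => v i) →
    ∃ z : Fin N → ℝ, (∀ i, i ∉ F → z i = 0) ∧ ∑ i, z i • v i = 0 ∧ c z ≠ 0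

lemma exists_generic {d N : ℕ} (v : Fin N → Fin d → ℝ) :
    ∃ c : Module.Dual ℝ (Fin N → ℝ), Generic v c := by
  classical
  have h : ∀ F : {F : Finset (Fin N) // ¬ LinearIndependent ℝ (fun i : F => v i)},
      ∃ z : Fin N → ℝ, (∀ i, i ∉ F.1 → z i = 0) ∧ ∑ i, z i • v i = 0 ∧ z ≠ 0 := by
    rintro ⟨F, hF⟩
    obtain ⟨g, hg, i, hi⟩ := Fintype.not_linearIndependent_iff.1 hF
    refine ⟨fun j => if h : j ∈ F then g ⟨j, h⟩ else 0, fun j hj => by simp [hj], ?_, ?_⟩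
    · rw [← hg, ← Finset.sum_subset (Finset.subset_univ F), ← Finset.sum_coe_sort F]
      · refine Finset.sum_congr rfl fun j _ => ?_
        simp
      · intro j _ hj; simp [hj]
    · intro h0
      have := congrFun h0 i.1
      simp at this
      exact hi this
  choose z h1 h2 h3 using h
  obtain ⟨c, hc⟩ := Module.exists_dual_forall_apply_ne_zero (K := ℝ) z h3
  exact ⟨c, fun F hF => ⟨z ⟨F, hF⟩, h1 ⟨F, hF⟩, h2 _, hc _⟩⟩

lemma dual_eq_sum {N : ℕ} (c : Module.Dual ℝ (Fin N → ℝ)) (t : Fin N → ℝ) :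
    c t = ∑ i, t i * c (Pi.single i 1) := by
  conv_lhs => rw [pi_eq_sum_univ' t]
  simp [map_sum]

section Tiling

variable {d N : ℕ} {v : Fin N → Fin d → ℝ} {c : Module.Dual ℝ (Fin N → ℝ)}

/-- The linear functional `y` on `ℝ^d` with `y (v j) = c j` for `j ∈ B`: the dual solution
attached to the basis `B`. -/
noncomputable def dualSol {B : Finset (Fin N)} (h : IsBas v B) (c : Module.Dual ℝ (Fin N → ℝ)) :
    (Fin d → ℝ) →ₗ[ℝ] ℝ := h.basis.constr ℝ (fun j => c (Pi.single j.1 1))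

/-- The reduced cost of the index `i` with respect to the basis `B`. -/
noncomputable def redCost {B : Finset (Fin N)} (h : IsBas v B) (c : Module.Dual ℝ (Fin N → ℝ))
    (i : Fin N) : ℝ := c (Pi.single i 1) - dualSol h c (v i)

/-- The translation vector of the tile attached to the basis `B`. -/
noncomputable def shiftB {B : Finset (Fin N)} (h : IsBas v B) (c : Module.Dual ℝ (Fin N → ℝ)) :
    Fin d → ℝ := ∑ i with redCost h c i < 0, v i

lemma redCost_mem {B : Finset (Fin N)} (h : IsBas v B) {i : Fin N} (hi : i ∈ B) :
    redCost h c i = 0 := by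
  have : dualSol h c (v i) = c (Pi.single i 1) := by
    rw [← h.basis_apply ⟨i, hi⟩, dualSol, Module.Basis.constr_basis]
  rw [redCost, this, sub_self]

/-- The cost of a parameter depends only on the point it represents and on the coordinates with
nonzero reduced cost. -/
lemma cost_eq {B : Finset (Fin N)} (h : IsBas v B) (t : Fin N → ℝ) :
    c t = dualSol h c (∑ i, t i • v i) + ∑ i, t i * redCost h c i := by
  rw [dual_eq_sum, map_sum, ← Finset.sum_add_distrib]
  refine Finset.sum_congr rfl fun i _ => ?_
  rw [map_smul, redCost, smul_eq_mul]; ring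

/-- Off the basis, a relation supported on `B ∪ {i}` has cost `redCost i * z i`; genericity
makes it nonzero. -/
lemma exists_rel (hc : Generic v c) {B : Finset (Fin N)} (h : IsBas v B) {i : Fin N} (hi : i ∉ B) :
    ∃ z : Fin N → ℝ, (∀ j, j ∉ B → j ≠ i → z j = 0) ∧ ∑ j, z j • v j = 0 ∧
      c z = z i * redCost h c i ∧ c z ≠ 0 := by
  classical
  have hdep : ¬ LinearIndependent ℝ (fun j : (insert i B : Finset (Fin N)) => v j) := by
    intro hli
    have h1 := linearIndependent_iff_notMem_span.1 hli ⟨i, Finset.mem_insert_self i B⟩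
    apply h1
    have h2 : v i ∈ Submodule.span ℝ (Set.range (fun j : B => v j)) := h.2 trivial
    refine Submodule.span_mono ?_ h2
    rintro _ ⟨⟨j, hj⟩, rfl⟩
    refine ⟨⟨j, Finset.mem_insert_of_mem hj⟩, ⟨trivial, ?_⟩, rfl⟩
    intro e
    simp only [Set.mem_singleton_iff, Subtype.mk.injEq] at e
    exact hi (e ▸ hj)
  obtain ⟨z, h1, h2, h3⟩ := hc _ hdep
  refine ⟨z, fun j hj hji => h1 j (by simp [hj, hji]), h2, ?_, h3⟩
  rw [cost_eq h, h2, map_zero, zero_add]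
  refine Finset.sum_eq_single i (fun j _ hji => ?_) (by simp)
  by_cases hj : j ∈ B
  · rw [redCost_mem h hj, mul_zero]
  · rw [h1 j (by simp [hj, hji]), zero_mul]

lemma redCost_ne_zero (hc : Generic v c) {B : Finset (Fin N)} (h : IsBas v B) {i : Fin N}
    (hi : i ∉ B) : redCost h c i ≠ 0 := by
  obtain ⟨z, -, -, h1, h2⟩ := exists_rel hc h hi
  intro h0
  rw [h1, h0, mul_zero] at h2
  exact h2 rfl

/-- First-order condition at an optimal parameter: feasible directions have nonnegative cost. -/
lemma perturb {x : Fin d → ℝ} {t : Fin N → ℝ} (ht : t ∈ feas v x)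
    (hopt : ∀ t' ∈ feas v x, c t ≤ c t') {z : Fin N → ℝ} (hz : ∑ i, z i • v i = 0)
    (h0 : ∀ i, t i = 0 → 0 ≤ z i) (h1 : ∀ i, t i = 1 → z i ≤ 0) : 0 ≤ c z := by
  have key : ∀ i, ∀ᶠ ε : ℝ in nhdsWithin 0 (Set.Ioi 0), 0 ≤ t i + ε * z i ∧ t i + ε * z i ≤ 1 := by
    intro i
    have hcont : Filter.Tendsto (fun ε : ℝ => t i + ε * z i) (nhdsWithin 0 (Set.Ioi 0))
        (nhds (t i)) := by
      have : Continuous (fun ε : ℝ => t i + ε * z i) := by fun_prop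
      have := this.tendsto 0
      simp only [zero_mul, add_zero] at this
      exact this.mono_left nhdsWithin_le_nhds
    have hpos : ∀ᶠ ε : ℝ in nhdsWithin 0 (Set.Ioi 0), 0 < ε := eventually_mem_nhdsWithin
    refine Filter.Eventually.and ?_ ?_
    · rcases (ht.1 i).1.eq_or_lt with h | h
      · filter_upwards [hpos] with ε hε
        have := mul_nonneg hε.le (h0 i h.symm)
        linarith
      · filter_upwards [hcont.eventually (lt_mem_nhds h)] with ε hε using hε.le
    · rcases (ht.1 i).2.eq_or_lt with h | h
      · filter_upwards [hpos] with ε hε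
        have := mul_nonneg hε.le (neg_nonneg.2 (h1 i h))
        linarith
      · filter_upwards [hcont.eventually (gt_mem_nhds h)] with ε hε using hε.le
  have hpos : ∀ᶠ ε : ℝ in nhdsWithin 0 (Set.Ioi 0), 0 < ε := eventually_mem_nhdsWithin
  obtain ⟨ε, hε, hε0⟩ := ((Filter.eventually_all.2 key).and hpos).exists
  have hmem : t + ε • z ∈ feas v x := by
    refine ⟨fun i => by simpa using hε i, ?_⟩
    simp only [Pi.add_apply, Pi.smul_apply, add_smul, Finset.sum_add_distrib, smul_assoc,
      ← Finset.smul_sum, hz, smul_zero, add_zero]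
    exact ht.2
  have := hopt _ hmem
  rw [map_add, map_smul, smul_eq_mul] at this
  exact nonneg_of_mul_nonneg_right (by linarith) hε0

/-- The set of fractional coordinates of a parameter. -/
noncomputable def frac (t : Fin N → ℝ) : Finset (Fin N) := {i | 0 < t i ∧ t i < 1}

lemma mem_frac {t : Fin N → ℝ} {i : Fin N} : i ∈ frac t ↔ 0 < t i ∧ t i < 1 := by
  simp [frac]

lemma eq_zero_or_one {x : Fin d → ℝ} {t : Fin N → ℝ} (ht : t ∈ feas v x) {i : Fin N}
    (hi : i ∉ frac t) : t i = 0 ∨ t i = 1 := by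
  rw [mem_frac] at hi
  rcases (ht.1 i).1.eq_or_lt with h | h
  · exact Or.inl h.symm
  · exact Or.inr (le_antisymm (ht.1 i).2 (not_lt.1 fun h' => hi ⟨h, h'⟩))

lemma feas_decomp {x : Fin d → ℝ} {t : Fin N → ℝ} (ht : t ∈ feas v x) :
    x - ∑ i with t i = 1, v i = ∑ i : frac t, t i • v i := by
  rw [sub_eq_iff_eq_add, ht.2, Finset.sum_coe_sort (frac t) (fun i => t i • v i),
    Finset.sum_filter, frac, Finset.sum_filter, ← Finset.sum_add_distrib]
  refine Finset.sum_congr rfl fun i _ => ?_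
  by_cases hi : i ∈ frac t
  · have := mem_frac.1 hi
    simp [this.1, this.2, this.2.ne]
  · have h2 := fun h => hi (mem_frac.2 h)
    rcases eq_zero_or_one ht hi with h | h <;> simp [h]

/-- The fractional coordinates of an optimal parameter index a basis, and the point lies in the
tile of this basis. -/
lemma opt_tile (hc : Generic v c) {x : Fin d → ℝ} (hx : x ∉ wall v) {t : Fin N → ℝ}
    (ht : t ∈ feas v x) (hopt : ∀ t' ∈ feas v x, c t ≤ c t') :
    ∃ h : IsBas v (frac t), x - shiftB h c ∈ ZSpan.fundamentalDomain h.basis := by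
  have hli : LinearIndependent ℝ (fun i : frac t => v i) := by
    by_contra hdep
    obtain ⟨z, h1, h2, h3⟩ := hc _ hdep
    have hz0 : ∀ i, t i = 0 → z i = 0 := fun i hi => h1 i (by simp [mem_frac, hi])
    have hz1 : ∀ i, t i = 1 → z i = 0 := fun i hi => h1 i (by simp [mem_frac, hi])
    have a1 := perturb ht hopt h2 (fun i hi => (hz0 i hi).ge) (fun i hi => (hz1 i hi).le)
    have a2 := perturb (z := -z) ht hopt (by simpa using h2) (fun i hi => by simp [hz0 i hi])
      (fun i hi => by simp [hz1 i hi])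
    rw [map_neg] at a2
    exact h3 (le_antisymm (by linarith) a1)
  have hspan : Submodule.span ℝ (v '' (frac t : Set (Fin N))) = ⊤ := by
    by_contra hne
    refine hx ⟨({i | t i = 1} : Finset (Fin N)), frac t, hne, ?_⟩
    rw [feas_decomp ht]
    exact Submodule.sum_mem _ fun i _ => Submodule.smul_mem _ _
      (Submodule.subset_span ⟨i.1, i.2, rfl⟩)
  have hB : IsBas v (frac t) := by
    refine ⟨hli, ?_⟩
    rw [← hspan]
    refine Submodule.span_mono ?_
    rintro _ ⟨i, hi, rfl⟩
    exact ⟨⟨i, hi⟩, rfl⟩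
  refine ⟨hB, ?_⟩
  have hsign : ∀ i, t i = 1 ↔ redCost hB c i < 0 := by
    intro i
    by_cases hi : i ∈ frac t
    · rw [redCost_mem hB hi]
      simpa using (mem_frac.1 hi).2.ne
    · obtain ⟨z, h1, h2, h3, h4⟩ := exists_rel hc hB hi
      have hne := redCost_ne_zero hc hB hi
      have hz : z i ≠ 0 := fun h => by rw [h3, h, zero_mul] at h4; exact h4 rfl
      -- the relation normalised to have coefficient `1` at `i`
      set w := (z i)⁻¹ • z with hw
      have w1 : w i = 1 := by simp [hw, hz]
      have w0 : ∀ j, j ∉ frac t → j ≠ i → w j = 0 := fun j hj hji => by simp [hw, h1 j hj hji]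
      have wv : ∑ j, w j • v j = 0 := by
        simp only [hw, Pi.smul_apply, smul_assoc, ← Finset.smul_sum, h2, smul_zero]
      have wc : c w = redCost hB c i := by
        rw [hw, map_smul, h3, smul_eq_mul, inv_mul_cancel_left₀ hz]
      rcases eq_zero_or_one ht hi with h | h
      · have := perturb ht hopt wv (fun j hj => by
            by_cases hji : j = i
            · rw [hji, w1]; exact zero_le_one
            · rw [w0 j (by simp [mem_frac, hj]) hji]) (fun j hj => by
            by_cases hji : j = i
            · rw [hji, h] at hj; norm_num at hj
            · rw [w0 j (by simp [mem_frac, hj]) hji])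
        rw [wc] at this
        simp only [h, zero_ne_one, false_iff, not_lt]
        exact this
      · have := perturb (z := -w) ht hopt (by simpa using wv) (fun j hj => by
            by_cases hji : j = i
            · rw [hji, h] at hj; norm_num at hj
            · rw [Pi.neg_apply, w0 j (by simp [mem_frac, hj]) hji, neg_zero]) (fun j hj => by
            by_cases hji : j = i
            · rw [hji, Pi.neg_apply, w1]; norm_num
            · rw [Pi.neg_apply, w0 j (by simp [mem_frac, hj]) hji, neg_zero])
        rw [map_neg, wc] at this
        simp only [h, true_iff]
        exact lt_of_le_of_ne (by linarith) hne
  have hshift : shiftB hB c = ∑ i with t i = 1, v i := by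
    rw [shiftB]; congr 1; ext i; simp [hsign]
  rw [hshift, feas_decomp ht, ZSpan.mem_fundamentalDomain]
  intro i
  have : ∑ j : frac t, t j • v j = ∑ j : frac t, (fun j : frac t => t j) j • hB.basis j := by
    simp only [hB.basis_apply]
  rw [this, hB.basis.repr_sum_self]
  exact ⟨(mem_frac.1 i.2).1.le, (mem_frac.1 i.2).2⟩

/-- A point of the tile of `B`, off the walls, lies in the zonotope and has a unique optimal
parameter, whose fractional coordinates are exactly those in `B`. -/
lemma tile_opt (hc : Generic v c) {x : Fin d → ℝ} (hx : x ∉ wall v) {B : Finset (Fin N)}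
    (h : IsBas v B) (hxB : x - shiftB h c ∈ ZSpan.fundamentalDomain h.basis) :
    ∃ t ∈ feas v x, frac t = B ∧ ∀ t' ∈ feas v x, c t' ≤ c t → t' = t := by
  classical
  set ρ : B → ℝ := fun j => h.basis.repr (x - shiftB h c) j with hρ
  have hρm : ∀ j, 0 ≤ ρ j ∧ ρ j < 1 := fun j => (ZSpan.mem_fundamentalDomain _).1 hxB j
  have hsum : ∑ j, ρ j • v j = x - shiftB h c := by
    rw [← h.basis.sum_repr (x - shiftB h c)]
    simp only [h.basis_apply, hρ]
  have hρpos : ∀ j, 0 < ρ j := by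
    intro j
    -- a vanishing coordinate would put `x` on a wall
    refine lt_of_le_of_ne (hρm j).1 fun h0 =>
      hx ⟨({i | redCost h c i < 0} : Finset (Fin N)), B.erase j.1, ?_, ?_⟩
    · intro htop
      have h1 := linearIndependent_iff_notMem_span.1 h.1 j
      apply h1
      have : v j ∈ Submodule.span ℝ (v '' (B.erase j.1 : Finset (Fin N))) := by
        rw [htop]; trivial
      refine Submodule.span_mono ?_ this
      rintro _ ⟨i, hi, rfl⟩
      have hi' := Finset.mem_erase.1 (Finset.mem_coe.1 hi)
      exact ⟨⟨i, hi'.2⟩, ⟨trivial, fun e => hi'.1 (congrArg Subtype.val e)⟩, rfl⟩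
    · change x - shiftB h c ∈ _
      rw [← hsum]
      refine Submodule.sum_mem _ fun i _ => ?_
      by_cases hij : i = j
      · rw [hij, ← h0, zero_smul]; exact Submodule.zero_mem _
      · refine Submodule.smul_mem _ _ (Submodule.subset_span ⟨i.1, ?_, rfl⟩)
        exact Finset.mem_coe.2 (Finset.mem_erase.2 ⟨fun e => hij (Subtype.ext e), i.2⟩)
  let t : Fin N → ℝ := fun i => if hi : i ∈ B then ρ ⟨i, hi⟩ else
    if redCost h c i < 0 then 1 else 0
  have tB : ∀ j : B, t j = ρ j := fun j => by simp [t]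
  have tn : ∀ i, i ∉ B → t i = if redCost h c i < 0 then 1 else 0 := fun i hi => by simp [t, hi]
  have ht : t ∈ feas v x := by
    refine ⟨fun i => ?_, ?_⟩
    · by_cases hi : i ∈ B
      · have := hρm ⟨i, hi⟩
        rw [tB ⟨i, hi⟩]; exact ⟨this.1, this.2.le⟩
      · rw [tn i hi]; split_ifs <;> norm_num
    · have e : x = ∑ j, ρ j • v j + shiftB h c := by rw [hsum]; abel
      rw [e, shiftB, Finset.sum_filter]
      have e2 : ∑ j : B, ρ j • v j = ∑ i, if i ∈ B then t i • v i else 0 := by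
        rw [← Finset.sum_filter, Finset.filter_mem_eq_inter, Finset.univ_inter,
          ← Finset.sum_coe_sort B]
        exact Finset.sum_congr rfl fun j _ => by rw [tB]
      rw [e2, ← Finset.sum_add_distrib]
      refine Finset.sum_congr rfl fun i _ => ?_
      by_cases hi : i ∈ B
      · simp [hi, redCost_mem h hi]
      · rw [tn i hi]; simp [hi]
  refine ⟨t, ht, ?_, fun t' ht' hle => ?_⟩
  · ext i
    rw [mem_frac]
    by_cases hi : i ∈ B
    · rw [tB ⟨i, hi⟩]
      simp only [hi, iff_true]
      exact ⟨hρpos _, (hρm _).2⟩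
    · rw [tn i hi]
      simp only [hi, iff_false]
      split_ifs <;> norm_num
  · have h1 : ∀ i, 0 ≤ (t' i - t i) * redCost h c i := by
      intro i
      by_cases hi : i ∈ B
      · rw [redCost_mem h hi, mul_zero]
      · rw [tn i hi]
        split_ifs with hr
        · exact mul_nonneg_of_nonpos_of_nonpos (by linarith [(ht'.1 i).2]) hr.le
        · exact mul_nonneg (by linarith [(ht'.1 i).1]) (not_lt.1 hr)
    have h2 : ∑ i, (t' i - t i) * redCost h c i = 0 := by
      refine le_antisymm ?_ (Finset.sum_nonneg fun i _ => h1 i)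
      rw [cost_eq h, cost_eq h, ← ht.2, ← ht'.2] at hle
      simp only [sub_mul, Finset.sum_sub_distrib]
      linarith
    have h3 : ∀ i, i ∉ B → t' i = t i := by
      intro i hi
      have := (Finset.sum_eq_zero_iff_of_nonneg fun i _ => h1 i).1 h2 i (Finset.mem_univ i)
      rcases mul_eq_zero.1 this with h4 | h4
      · linarith
      · exact absurd h4 (redCost_ne_zero hc h hi)
    have h5 : ∑ j : B, (t' j - t j) • v j = 0 := by
      rw [Finset.sum_coe_sort B (fun j => (t' j - t j) • v j),
        Finset.sum_subset (Finset.subset_univ B) (fun i _ hi => by rw [h3 i hi, sub_self, zero_smul])]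
      simp only [sub_smul, Finset.sum_sub_distrib, ← ht.2, ← ht'.2, sub_self]
    have h6 := Fintype.linearIndependent_iff.1 h.1 _ h5
    funext i
    by_cases hi : i ∈ B
    · have := h6 ⟨i, hi⟩
      simp only at this
      linarith
    · exact h3 i hi

lemma exists_opt {x : Fin d → ℝ} (hx : x ∈ zono v) (c : Module.Dual ℝ (Fin N → ℝ)) :
    ∃ t ∈ feas v x, ∀ t' ∈ feas v x, c t ≤ c t' := by
  have hcpt : IsCompact (feas v x) := by
    have hsub : feas v x = Set.Icc (0 : Fin N → ℝ) 1 ∩ {t | x = ∑ i, t i • v i} := by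
      ext t
      simp only [feas, Set.mem_ofPred_eq, Set.mem_inter_iff, Set.mem_Icc, Pi.le_def, Pi.zero_apply,
        Pi.one_apply, forall_and]
    rw [hsub]
    refine isCompact_Icc.inter_right ?_
    exact isClosed_eq continuous_const (by fun_prop)
  obtain ⟨t, ht, hmin⟩ := hcpt.exists_isMinOn (f := c) hx
    (LinearMap.continuous_of_finiteDimensional c).continuousOn
  exact ⟨t, ht, fun t' ht' => hmin ht'⟩

open Classical in
/-- Almost everywhere, a zonotope is tiled by one translated half-open parallelepiped for each
basis contained in the generating family. -/
lemma zono_tiling (hc : Generic v c) {x : Fin d → ℝ} (hx : x ∉ wall v) :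
    Set.indicator (zono v) (fun _ => (1 : ℝ)) x =
      ∑ B : {B : Finset (Fin N) // IsBas v B},
        Set.indicator (ZSpan.fundamentalDomain B.2.basis) (fun _ => (1 : ℝ))
          (x - shiftB B.2 c) := by
  by_cases hZ : x ∈ zono v
  · obtain ⟨t, ht, hopt⟩ := exists_opt hZ c
    obtain ⟨hB, hmem⟩ := opt_tile hc hx ht hopt
    rw [Set.indicator_of_mem hZ, Finset.sum_eq_single ⟨frac t, hB⟩, Set.indicator_of_mem hmem]
    · rintro ⟨B, hB'⟩ _ hne
      refine Set.indicator_of_notMem (fun hmem' => hne ?_) _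
      obtain ⟨t', ht', hfr, huniq⟩ := tile_opt hc hx hB' hmem'
      rw [Subtype.mk.injEq, ← hfr, huniq t ht (hopt t' ht')]
    · simp
  · rw [Set.indicator_of_notMem hZ, eq_comm]
    refine Finset.sum_eq_zero fun B _ => Set.indicator_of_notMem (fun hmem => hZ ?_) _
    obtain ⟨t, ht, -⟩ := tile_opt hc hx B.2 hmem
    exact ⟨t, ht⟩

end Tiling

/-! ### From tiles to zonotopes -/

/-- The `ℤ^d`-periodization of the indicator of `Z` integrates over the unit cube to the volume
of `Z`, also after a translation. -/
lemma lintegral_periodization {d : ℕ} {Z : Set (Fin d → ℝ)} (hZ : MeasurableSet Z)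
    (w : Fin d → ℝ) :
    ∫⁻ x in ZSpan.fundamentalDomain (Pi.basisFun ℝ (Fin d)),
      ∑' p : Fin d → ℤ, Z.indicator (fun _ => (1 : ENNReal)) (x + w + fun i => (p i : ℝ)) =
      volume Z := by
  set b := Pi.basisFun ℝ (Fin d) with hb
  have hmeas : Measurable (Z.indicator (fun _ => (1 : ENNReal))) := measurable_const.indicator hZ
  have : Countable (Submodule.span ℤ (Set.range b)).toAddSubgroup :=
    inferInstanceAs (Countable (Submodule.span ℤ (Set.range b)))
  rw [lintegral_tsum]
  · have h := (ZSpan.isAddFundamentalDomain' b volume).lintegral_eq_tsum''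
      (fun x => Z.indicator (fun _ => (1 : ENNReal)) (x + w))
    rw [lintegral_add_right_eq_self, lintegral_indicator hZ, setLIntegral_one] at h
    rw [h, ← ((b.restrictScalars ℤ).equivFun.toEquiv).tsum_eq]
    refine tsum_congr fun g => ?_
    congr 1
    ext x
    congr 1
    have : (g : Fin d → ℝ) = fun i => (((b.restrictScalars ℤ).equivFun g i : ℤ) : ℝ) := by
      ext i
      have := b.restrictScalars_repr_apply ℤ g i
      simp only [Module.Basis.equivFun_apply]
      rw [show (((b.restrictScalars ℤ).repr g i : ℤ) : ℝ) =
        algebraMap ℤ ℝ ((b.restrictScalars ℤ).repr g i) from rfl, this]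
      simp [hb]
    change x + w + _ = (g : Fin d → ℝ) + x + w
    rw [this]
    simp only [LinearEquiv.coe_toEquiv]
    abel
  · intro p
    exact (hmeas.comp (by fun_prop)).aemeasurable

/-- Averaging over the torus shows that the frequency of visits can only be the volume. -/
lemma isBRS_of_rem {d : ℕ} {α : Fin d → ℝ} {Z : Set (Fin d → ℝ)} (hZ : MeasurableSet Z)
    (hvol : volume Z ≠ ⊤) {c C : ℝ}
    (h : ∀ᵐ x : Fin d → ℝ, ∀ n : ℕ,
      |∑ k ∈ Finset.range n, multFn Z (x + (k : ℝ) • α) - c * n| ≤ C) :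
    IsBRS α Z := by
  set Q := ZSpan.fundamentalDomain (Pi.basisFun ℝ (Fin d)) with hQ
  have hQvol : volume Q = 1 := by
    rw [hQ, ZSpan.fundamentalDomain_pi_basisFun, volume_pi_pi]; simp
  have hmeas : Measurable (Z.indicator (fun _ => (1 : ENNReal))) := measurable_const.indicator hZ
  have hM : ∀ w : Fin d → ℝ, Measurable fun x : Fin d → ℝ =>
      ∑' p : Fin d → ℤ, Z.indicator (fun _ => (1 : ENNReal)) (x + w + fun i => (p i : ℝ)) :=
    fun w => Measurable.tsum fun p => hmeas.comp (by fun_prop)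
  have hmult : ∀ w x : Fin d → ℝ, multFn Z (x + w) =
      (∑' p : Fin d → ℤ, Z.indicator (fun _ => (1 : ENNReal))
        (x + w + fun i => (p i : ℝ))).toReal := by
    intro w x
    rw [ENNReal.tsum_toReal_eq]
    · refine tsum_congr fun p => ?_
      by_cases hp : (x + w + fun i => (p i : ℝ)) ∈ Z <;> simp [hp]
    · intro p
      by_cases hp : (x + w + fun i => (p i : ℝ)) ∈ Z <;> simp [hp]
  have hne : ∀ w : Fin d → ℝ, ∫⁻ x in Q, ∑' p : Fin d → ℤ,
      Z.indicator (fun _ => (1 : ENNReal)) (x + w + fun i => (p i : ℝ)) ≠ ⊤ := fun w => by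
    rw [lintegral_periodization hZ w]; exact hvol
  have hint : ∀ w : Fin d → ℝ, IntegrableOn (fun x => multFn Z (x + w)) Q := fun w => by
    simp only [hmult]
    exact integrable_toReal_of_lintegral_ne_top (hM w).aemeasurable (hne w)
  have hval : ∀ w : Fin d → ℝ, ∫ x in Q, multFn Z (x + w) = (volume Z).toReal := fun w => by
    simp only [hmult]
    rw [integral_toReal (hM w).aemeasurable (ae_lt_top (hM w) (hne w)),
      lintegral_periodization hZ w]
  have hbd : ∀ n : ℕ, |n * (volume Z).toReal - c * n| ≤ C := by
    intro n
    have e : ∫ x in Q, (∑ k ∈ Finset.range n, multFn Z (x + (k : ℝ) • α) - c * n) =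
        n * (volume Z).toReal - c * n := by
      rw [integral_sub, integral_finsetSum]
      · simp [hval, measureReal_def, hQvol]
      · exact fun k _ => hint _
      · exact integrable_finsetSum _ fun k _ => hint _
      · exact integrableOn_const (by rw [hQvol]; exact ENNReal.one_ne_top)
    rw [← e, ← Real.norm_eq_abs]
    have := norm_setIntegral_le_of_norm_le_const_ae (μ := volume) (s := Q) (C := C)
      (f := fun x => ∑ k ∈ Finset.range n, multFn Z (x + (k : ℝ) • α) - c * n)
      (by rw [hQvol]; exact ENNReal.one_lt_top)
      (by filter_upwards [ae_restrict_of_ae h] with x hx using hx n)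
    simpa [measureReal_def, hQvol] using this
  have hc : (volume Z).toReal = c := by
    by_contra hne
    have hpos : 0 < |(volume Z).toReal - c| := abs_pos.2 (sub_ne_zero.2 hne)
    obtain ⟨n, hn⟩ := exists_nat_gt (C / |(volume Z).toReal - c|)
    rw [div_lt_iff₀ hpos] at hn
    have := hbd n
    rw [show (n : ℝ) * (volume Z).toReal - c * n = n * ((volume Z).toReal - c) by ring, abs_mul,
      Nat.abs_cast] at this
    linarith
  refine ⟨C, ?_⟩
  filter_upwards [h] with x hx n _
  rw [disc, hc, mul_comm]
  exact hx n

lemma isCompact_zono {d N : ℕ} (v : Fin N → Fin d → ℝ) : IsCompact (zono v) := by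
  have : zono v = (fun t : Fin N → ℝ => ∑ i, t i • v i) '' Set.Icc 0 1 := by
    ext x
    simp only [zono, Set.mem_ofPred_eq, Set.mem_image, Set.mem_Icc, Pi.le_def, Pi.zero_apply,
      Pi.one_apply, forall_and]
    exact exists_congr fun t => and_congr_right fun _ => eq_comm
  rw [this]
  exact isCompact_Icc.image (by fun_prop)

open Classical in
/-- The orbit of almost every point avoids the walls, so along it the counting function of the
zonotope is the sum of those of its parallelepiped tiles. -/
lemma isBRS_zono {d N : ℕ} {α : Fin d → ℝ} (v : Fin N → Fin d → ℝ) (hv : ∀ i, v i ∈ lat α) :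
    IsBRS α (zono v) := by
  obtain ⟨c, hc⟩ := exists_generic v
  have hrem : ∀ B : {B : Finset (Fin N) // IsBas v B}, _ := fun B =>
    paral_rem α B.2.basis (fun i => by rw [B.2.basis_apply]; exact hv i)
  choose κ C hκ using hrem
  refine isBRS_of_rem (c := ∑ B, κ B) (C := ∑ B, C B) (isCompact_zono v).measurableSet
    (isCompact_zono v).measure_lt_top.ne ?_
  have hae : ∀ᵐ x : Fin d → ℝ, ∀ m : ℤ × (Fin d → ℤ), x + latPt α m ∉ wall v := by
    rw [ae_all_iff]
    intro m
    rw [ae_iff]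
    simp only [not_not]
    exact (measure_preimage_add_right volume (latPt α m) (wall v)).trans (volume_wall v)
  filter_upwards [hae] with x hx n
  have hsum : ∀ k : ℕ, multFn (zono v) (x + (k : ℝ) • α) =
      ∑ B : {B : Finset (Fin N) // IsBas v B},
        multFn (ZSpan.fundamentalDomain B.2.basis) (x - shiftB B.2 c + (k : ℝ) • α) := by
    intro k
    simp only [multFn]
    rw [← Summable.tsum_finsetSum]
    · refine tsum_congr fun p => ?_
      have := zono_tiling hc (hx (k, p))
      rw [latPt_apply, ← add_assoc] at this
      simp only [Int.cast_natCast] at this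
      rw [this]
      refine Finset.sum_congr rfl fun B _ => ?_
      congr 1
      abel
    · intro B _
      refine summable_of_hasFiniteSupport ?_
      have hfin := finite_latPt α (x - shiftB B.2 c + (k : ℝ) • α)
        (ZSpan.fundamentalDomain_isBounded B.2.basis) 0
      refine (hfin.preimage (f := fun p => ((0 : ℤ), p))
        (fun p _ q _ h => (Prod.mk.inj h).2)).subset ?_
      intro p hp
      refine ⟨by simp, ?_⟩
      have := Set.mem_of_indicator_ne_zero hp
      simpa [latPt_apply] using this
  simp only [hsum]
  rw [Finset.sum_comm, Finset.sum_mul, ← Finset.sum_sub_distrib]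
  exact (Finset.abs_sum_le_sum_abs _ _).trans (Finset.sum_le_sum fun B _ => hκ B _ n)

lemma IsBRS.translate {d : ℕ} {α : Fin d → ℝ} {S : Set (Fin d → ℝ)} (h : IsBRS α S)
    (w : Fin d → ℝ) : IsBRS α {x | x - w ∈ S} := by
  obtain ⟨C, hC⟩ := h
  refine ⟨C, ?_⟩
  have h1 : ∀ᵐ x : Fin d → ℝ, ∀ n : ℕ, 1 ≤ n → |disc α S n (x + -w)| ≤ C :=
    (measurePreserving_add_right volume (-w)).quasiMeasurePreserving.ae hC
  have hvol : volume {x | x - w ∈ S} = volume S := by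
    have := measure_preimage_add_right volume (-w) S
    simpa [Set.preimage, ← sub_eq_add_neg] using this
  have hm : ∀ y, multFn {x | x - w ∈ S} y = multFn S (y + -w) := by
    intro y
    refine tsum_congr fun p => ?_
    have : (y + fun i => (p i : ℝ)) - w = y + -w + fun i => (p i : ℝ) := by abel
    rw [← this]
    rfl
  filter_upwards [h1] with x hx n hn
  have := hx n hn
  rw [disc] at this ⊢
  rw [hvol]
  simp only [hm, add_right_comm x _ (-w)]
  exact this

/-! ### Zonotopes with vertices in the group -/

/-- Two parallel generators `v i` and `v j = s • v i` can be replaced by the single generator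
`(1 + |s|) • v i`, at the cost of a translation. -/
lemma merge {d N : ℕ} (v : Fin N → Fin d → ℝ) {i j : Fin N} (hij : i ≠ j) {s : ℝ}
    (hs : v j = s • v i) (x : Fin d → ℝ) :
    x ∈ zono v ↔ x - (min s 0) • v i ∈
      zono (Function.update (Function.update v i ((1 + |s|) • v i)) j 0) := by
  set v' := Function.update (Function.update v i ((1 + |s|) • v i)) j 0 with hv'
  have vi : v' i = (1 + |s|) • v i := by simp [hv', hij]
  have vj : v' j = 0 := by simp [hv']
  have vk : ∀ k, k ≠ i → k ≠ j → v' k = v k := fun k h1 h2 => by simp [hv', h1, h2]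
  have hpos : (0 : ℝ) < 1 + |s| := by positivity
  have hdiff : ∀ t t' : Fin N → ℝ, (∀ k, k ≠ i → k ≠ j → t k = t' k) →
      ∑ k, t k • v k - ∑ k, t' k • v' k = (t i + t j * s - t' i * (1 + |s|)) • v i := by
    intro t t' h
    rw [← Finset.sum_sub_distrib, Fintype.sum_eq_add i j hij]
    · rw [vi, vj, hs]; module
    · rintro k ⟨h1, h2⟩
      rw [vk k h1 h2, h k h1 h2, sub_self]
  constructor
  · rintro ⟨t, ht, rfl⟩
    -- the new coordinate, reversing the segment `[0, v j]` when `s < 0`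
    set τ : ℝ := (t i + t j * s - min s 0) / (1 + |s|) with hτ
    refine ⟨Function.update t i τ, fun k => ?_, ?_⟩
    · by_cases hk : k = i
      · subst hk
        have h1 := ht k
        have h2 := ht j
        rw [Function.update_self, hτ, div_le_one hpos]
        rcases le_total 0 s with h | h
        · rw [min_eq_right h, abs_of_nonneg h]
          exact ⟨div_nonneg (by nlinarith) (by linarith), by nlinarith⟩
        · rw [min_eq_left h, abs_of_nonpos h]
          exact ⟨div_nonneg (by nlinarith) (by linarith), by nlinarith⟩
      · rw [Function.update_of_ne hk]; exact ht k
    · have := hdiff t (Function.update t i τ) (fun k h1 h2 => by rw [Function.update_of_ne h1])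
      rw [Function.update_self, hτ, div_mul_cancel₀ _ hpos.ne'] at this
      rw [sub_eq_iff_eq_add, add_comm, ← sub_eq_iff_eq_add, this]
      congr 1; ring
  · rintro ⟨t, ht, hx⟩
    set τ : ℝ := if s < 0 then 1 - t i else t i with hτ
    refine ⟨Function.update t j τ, fun k => ?_, ?_⟩
    · by_cases hk : k = j
      · subst hk
        rw [Function.update_self, hτ]
        have := ht i
        split_ifs
        · constructor <;> linarith
        · exact this
      · rw [Function.update_of_ne hk]; exact ht k
    · have := hdiff (Function.update t j τ) t (fun k h1 h2 => by rw [Function.update_of_ne h2])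
      rw [Function.update_self, Function.update_of_ne hij, ← hx] at this
      have e : t i + τ * s - t i * (1 + |s|) = min s 0 := by
        rw [hτ]
        split_ifs with h
        · rw [min_eq_left h.le, abs_of_neg h]; ring
        · rw [min_eq_right (not_lt.1 h), abs_of_nonneg (not_lt.1 h)]; ring
      rw [e, sub_eq_iff_eq_add] at this
      rw [this]; abel

lemma lat_sub {d : ℕ} {α x y : Fin d → ℝ} (hx : x ∈ lat α) (hy : y ∈ lat α) : x - y ∈ lat α := by
  obtain ⟨q, p, rfl⟩ := hx
  obtain ⟨q', p', rfl⟩ := hy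
  refine ⟨q - q', p - p', ?_⟩
  ext i
  simp
  ring

lemma zero_mem_lat {d : ℕ} (α : Fin d → ℝ) : (0 : Fin d → ℝ) ∈ lat α :=
  ⟨0, 0, by ext i; simp⟩

/-- A generator not parallel to any other one is the difference of the endpoints of an edge of
the zonotope, the face where a suitable linear functional is maximal. -/
lemma exists_edge {d N : ℕ} (v : Fin N → Fin d → ℝ) (c : Fin d → ℝ) {i : Fin N} (hi : v i ≠ 0)
    (hpar : ∀ j, j ≠ i → v j ≠ 0 → v j ∉ Submodule.span ℝ {v i}) :
    ∃ p, p ∈ Set.extremePoints ℝ {x | x - c ∈ zono v} ∧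
      p + v i ∈ Set.extremePoints ℝ {x | x - c ∈ zono v} := by
  classical
  obtain ⟨f, hf⟩ := Module.exists_dual_forall_apply_ne_zero (K := ℝ)
    (fun j : {j // j ≠ i ∧ v j ≠ 0} => (Submodule.span ℝ {v i}).mkQ (v j)) (fun j => by
      rw [Submodule.mkQ_apply, Ne, Submodule.Quotient.mk_eq_zero]
      exact hpar j j.2.1 j.2.2)
  set g : (Fin d → ℝ) →ₗ[ℝ] ℝ := f ∘ₗ (Submodule.span ℝ {v i}).mkQ with hg
  have gi : g (v i) = 0 := by
    have : (Submodule.span ℝ {v i}).mkQ (v i) = 0 := by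
      rw [Submodule.mkQ_apply, Submodule.Quotient.mk_eq_zero]
      exact Submodule.mem_span_singleton_self _
    rw [hg, LinearMap.comp_apply, this, map_zero]
  have gj : ∀ j, j ≠ i → g (v j) = 0 → v j = 0 := by
    intro j h1 h2
    by_contra h3
    exact hf ⟨j, h1, h3⟩ h2
  -- `g` vanishes on `v i` but on no other nonzero generator, so the face of the zonotope where
  -- `g` is maximal is the segment from `p` to `p + v i`, where `p = c + ∑ j, e j • v j`
  let e : Fin N → ℝ := fun j => if 0 < g (v j) then 1 else 0
  have ei : e i = 0 := by simp [e, gi]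
  have e01 : ∀ j, 0 ≤ e j ∧ e j ≤ 1 := fun j => by simp only [e]; split_ifs <;> norm_num
  set p := c + ∑ j, e j • v j with hp
  have hmem : ∀ s : ℝ, 0 ≤ s → s ≤ 1 → p + s • v i ∈ {x | x - c ∈ zono v} := by
    intro s h0 h1
    refine ⟨Function.update e i s, fun j => ?_, ?_⟩
    · by_cases hj : j = i
      · subst hj; rw [Function.update_self]; exact ⟨h0, h1⟩
      · rw [Function.update_of_ne hj]; exact e01 j
    · have : ∑ j, Function.update e i s j • v j - ∑ j, e j • v j = s • v i := by
        rw [← Finset.sum_sub_distrib, Finset.sum_eq_single i]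
        · rw [Function.update_self, ei, zero_smul, sub_zero]
        · intro j _ hj
          rw [Function.update_of_ne hj, sub_self]
        · simp
      rw [sub_eq_iff_eq_add] at this
      rw [this, hp]; abel
  have hmax : ∀ x ∈ {x | x - c ∈ zono v}, g x ≤ g p ∧
      (g x = g p → ∃ s : ℝ, 0 ≤ s ∧ s ≤ 1 ∧ x = p + s • v i) := by
    rintro x ⟨t, ht, hx⟩
    have hnn : ∀ j, 0 ≤ (e j - t j) * g (v j) := by
      intro j
      simp only [e]
      split_ifs with h
      · exact mul_nonneg (by linarith [(ht j).2]) h.le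
      · exact mul_nonneg_of_nonpos_of_nonpos (by linarith [(ht j).1]) (not_lt.1 h)
    have hx' : x = c + ∑ j, t j • v j := by rw [← hx]; abel
    have hgap : g p - g x = ∑ j, (e j - t j) * g (v j) := by
      rw [hx', hp]
      simp only [map_add, map_sum, map_smul, smul_eq_mul, sub_mul, Finset.sum_sub_distrib]
      ring
    refine ⟨by linarith [Finset.sum_nonneg fun j (_ : j ∈ Finset.univ) => hnn j], fun heq => ?_⟩
    refine ⟨t i, (ht i).1, (ht i).2, ?_⟩
    rw [heq, sub_self] at hgap
    have hz := (Finset.sum_eq_zero_iff_of_nonneg fun j _ => hnn j).1 hgap.symm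
    have : ∑ j, t j • v j - ∑ j, e j • v j = t i • v i := by
      rw [← Finset.sum_sub_distrib, Finset.sum_eq_single i]
      · rw [ei, zero_smul, sub_zero]
      · intro j _ hj
        rcases mul_eq_zero.1 (hz j (Finset.mem_univ j)) with h | h
        · rw [← sub_smul, ← neg_sub, h, neg_zero, zero_smul]
        · rw [gj j hj h]; simp
      · simp
    rw [sub_eq_iff_eq_add] at this
    rw [hx', this, hp]; abel
  have hinj : ∀ s s' : ℝ, p + s • v i = p + s' • v i → s = s' := fun s s' h =>
    smul_left_injective ℝ hi (add_left_cancel h)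
  have hext : ∀ σ : ℝ, σ = 0 ∨ σ = 1 → p + σ • v i ∈ Set.extremePoints ℝ {x | x - c ∈ zono v} := by
    intro σ hσ
    rw [mem_extremePoints]
    refine ⟨hmem σ (by rcases hσ with rfl | rfl <;> norm_num)
      (by rcases hσ with rfl | rfl <;> norm_num), ?_⟩
    rintro x hx y hy ⟨a, b, ha, hb, hab, hxy⟩
    obtain ⟨x1, x2⟩ := hmax x hx
    obtain ⟨y1, y2⟩ := hmax y hy
    have hg1 : a * g x + b * g y = g p := by
      have := congrArg g hxy
      simpa [gi] using this
    have hb' : b = 1 - a := by linarith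
    have hgx : g x = g p := by
      refine le_antisymm x1 ?_
      by_contra hlt
      have h₁ := mul_lt_mul_of_pos_left (not_le.1 hlt) ha
      have h₂ := mul_le_mul_of_nonneg_left y1 hb.le
      have h₃ : a * g p + b * g p = g p := by rw [← add_mul, hab, one_mul]
      linarith
    have hgy : g y = g p := by
      refine le_antisymm y1 ?_
      by_contra hlt
      have h₁ := mul_lt_mul_of_pos_left (not_le.1 hlt) hb
      have h₂ := mul_le_mul_of_nonneg_left x1 ha.le
      have h₃ : a * g p + b * g p = g p := by rw [← add_mul, hab, one_mul]
      linarith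
    obtain ⟨s, s0, s1, rfl⟩ := x2 hgx
    obtain ⟨r, r0, r1, rfl⟩ := y2 hgy
    have hsr : a * s + b * r = σ := by
      refine hinj _ _ ?_
      rw [← hxy]
      have : p = a • p + b • p := by rw [← add_smul, hab, one_smul]
      nth_rewrite 1 [this]
      module
    rcases hσ with rfl | rfl
    · have h1 : s = 0 := by
        by_contra h
        have := lt_of_le_of_ne s0 (Ne.symm h)
        nlinarith [mul_pos ha this, mul_nonneg hb.le r0]
      have h2 : r = 0 := by
        by_contra h
        have := lt_of_le_of_ne r0 (Ne.symm h)
        nlinarith [mul_pos hb this, mul_nonneg ha.le s0]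
      rw [h1, h2]; exact ⟨rfl, rfl⟩
    · have h1 : s = 1 := by
        by_contra h
        have := lt_of_le_of_ne s1 h
        nlinarith [mul_pos ha (sub_pos.2 this), mul_nonneg hb.le (sub_nonneg.2 r1)]
      have h2 : r = 1 := by
        by_contra h
        have := lt_of_le_of_ne r1 h
        nlinarith [mul_pos hb (sub_pos.2 this), mul_nonneg ha.le (sub_nonneg.2 s1)]
      rw [h1, h2]; exact ⟨rfl, rfl⟩
  refine ⟨p, ?_, ?_⟩
  · simpa using hext 0 (Or.inl rfl)
  · simpa using hext 1 (Or.inr rfl)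

open Classical in
/-- Zonotopes with vertices in `ℤα + ℤ^d`, by induction on the number of nonzero generators:
parallel generators are merged, and once no two are parallel each generator is an edge vector. -/
lemma isBRS_of_vertices {d N : ℕ} {α : Fin d → ℝ} (n : ℕ) : ∀ (v : Fin N → Fin d → ℝ)
    (c : Fin d → ℝ), (Finset.univ.filter fun i => v i ≠ 0).card = n →
    (∀ p ∈ Set.extremePoints ℝ {x | x - c ∈ zono v}, p ∈ lat α) →
    IsBRS α {x | x - c ∈ zono v} := by
  induction n using Nat.strong_induction_on with
  | _ n ih =>
    intro v c hn hext
    by_cases hpar : ∃ i j, i ≠ j ∧ v i ≠ 0 ∧ v j ≠ 0 ∧ v j ∈ Submodule.span ℝ {v i}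
    · obtain ⟨i, j, hij, hvi, hvj, hmem⟩ := hpar
      obtain ⟨s, hs⟩ := Submodule.mem_span_singleton.1 hmem
      set v' := Function.update (Function.update v i ((1 + |s|) • v i)) j 0 with hv'
      have hset : {x | x - c ∈ zono v} = {x | x - (c + min s 0 • v i) ∈ zono v'} := by
        ext x
        rw [Set.mem_ofPred_eq, Set.mem_ofPred_eq, merge v hij hs.symm, sub_sub]
      have hcard : (Finset.univ.filter fun k => v' k ≠ 0).card < n := by
        rw [← hn]
        refine Finset.card_lt_card ((Finset.ssubset_iff_of_subset ?_).2 ⟨j, ?_, ?_⟩)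
        · intro k hk
          simp only [Finset.mem_filter_univ] at hk ⊢
          by_cases hkj : k = j
          · rw [hkj]; exact hvj
          · by_cases hki : k = i
            · rw [hki]; exact hvi
            · simpa [hv', hkj, hki] using hk
        · simpa using hvj
        · simp [hv']
      rw [hset] at hext ⊢
      exact ih _ hcard v' _ rfl hext
    · push Not at hpar
      refine (isBRS_zono v fun i => ?_).translate c
      by_cases hi : v i = 0
      · rw [hi]; exact zero_mem_lat α
      · obtain ⟨p, h1, h2⟩ := exists_edge v c hi
          (fun j hji hj => hpar i j (Ne.symm hji) hi hj)
        have := lat_sub (hext _ h2) (hext _ h1)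
        rwa [add_sub_cancel_left] at this

/-- The zonotope generated by segments `[0, vᵢ]` with `vᵢ ∈ ℤα + ℤ^d` is a
bounded remainder set; in particular any zonotope (translate of a Minkowski sum of segments)
whose extreme points (vertices) lie in `ℤα + ℤ^d` is a bounded remainder set. -/
theorem stmt1 {d : ℕ} (hd : 1 ≤ d) (α : Fin d → ℝ) (hα : IsIrrationalVector α) :
    (∀ (N : ℕ) (v : Fin N → Fin d → ℝ), (∀ i, v i ∈ lat α) →
      IsBRS α {x | ∃ t : Fin N → ℝ, (∀ i, 0 ≤ t i ∧ t i ≤ 1) ∧ x = ∑ i, t i • v i}) ∧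
    (∀ (Z : Set (Fin d → ℝ)) (c : Fin d → ℝ) (N : ℕ) (v : Fin N → Fin d → ℝ),
      Z = {x | ∃ t : Fin N → ℝ, (∀ i, 0 ≤ t i ∧ t i ≤ 1) ∧ x = c + ∑ i, t i • v i} →
      (∀ p ∈ Set.extremePoints ℝ Z, p ∈ lat α) → IsBRS α Z) := by
  refine ⟨fun N v hv => isBRS_zono v hv, fun Z c N v hZ hext => ?_⟩
  have e : Z = {x | x - c ∈ zono v} := by
    rw [hZ]
    ext x
    exact exists_congr fun t => and_congr_right fun _ => by rw [sub_eq_iff_eq_add']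
  subst e
  classical
  exact isBRS_of_vertices _ v c rfl hext
end

section
/- Let α be an irrational vector in ℝ^d and let γ be a positive real number of the form γ = n₀ + n₁α₁ + ⋯ + n_dα_d with n₀, n₁, …, n_d ∈ ℤ. Then there exist linearly independent vectors v₁, …, v_d ∈ ℤα + ℤ^d such that the parallelepiped P spanned by v₁, …, v_d satisfies Leb(P) = γ (so that P is a bounded remainder set with respect to α). Moreover, if γ ≤ 1, then P may be chosen to be a simple set. -/
/-!
Every integer vector `n` is `g` times a row `c` of some `C ∈ GL_d(ℤ)`. In the coordinates `y = C x`,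
which preserve Lebesgue measure and the lattice `ℤ^d`, with `i₀` the index of the row `c`, one has
`γ = n₀ + g a` where `a = (C α) i₀`. The parallelepiped has as edges the coordinate vectors `e_j`
for `j ≠ i₀` together with `g • C α + n₀ • e_{i₀}`, whose `i₀`-th coordinate is `γ`. All of these
lie in the image of `ℤα + ℤ^d`, and the determinant is `γ`.

An integer translate of a point lies in this sheared box iff its `i₀`-th coordinate lies in `[0, γ)`
and the other coordinates, after removing the shear, lie in `[0, 1)`. The latter determines the other
components of the translation uniquely, so the multiplicity function is
`⌈γ - u⌉ - ⌈-u⌉` with `u = (C x) i₀` (`multFn_paral`). This is `0` or `1` when `γ ≤ 1`. Moreover it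
equals `n₀ + ⌈g a - u⌉ - ⌈-u⌉`, whose sums along the orbit `u, u + a, u + 2a, …` telescope, with
error at most `|g|` (`telescope_int`); hence the bounded remainder property holds at every point.
-/


open MeasureTheory

/-! ### Unimodular change of coordinates -/

/-- Elementary divisors in rank one: an integer vector is a multiple of a row of a matrix
`C ∈ GL_d(ℤ)`, whose inverse is `D`. -/
lemma exists_unimodular_row {d : ℕ} (hd : 1 ≤ d) (n : Fin d → ℤ) :
    ∃ (C D : Matrix (Fin d) (Fin d) ℤ) (i₀ : Fin d) (g : ℤ),
      C * D = 1 ∧ D * C = 1 ∧ ∀ i, n i = g * C i₀ i := by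
  suffices h : ∃ (c : Module.Basis (Fin d) ℤ (Fin d → ℤ)) (i₀ : Fin d) (g : ℤ), n = g • c i₀ by
    obtain ⟨c, i₀, g, h⟩ := h
    refine ⟨((Pi.basisFun ℤ (Fin d)).toMatrix c).transpose,
      (c.toMatrix (Pi.basisFun ℤ (Fin d))).transpose, i₀, g, ?_, ?_, ?_⟩
    · rw [← Matrix.transpose_mul, Module.Basis.toMatrix_mul_toMatrix_flip, Matrix.transpose_one]
    · rw [← Matrix.transpose_mul, Module.Basis.toMatrix_mul_toMatrix_flip, Matrix.transpose_one]
    · intro i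
      simp [h, Module.Basis.toMatrix_apply]
  obtain ⟨r, S⟩ := Submodule.smithNormalForm (Pi.basisFun ℤ (Fin d)) (Submodule.span ℤ {n})
  have hr : r ≤ 1 := by
    have h1 := finrank_span_le_card (R := ℤ) ({n} : Set (Fin d → ℤ))
    rw [Module.finrank_eq_card_basis S.bN] at h1
    simpa using h1
  have hn : n ∈ Submodule.span ℤ {n} := Submodule.mem_span_singleton_self n
  have hsum := congrArg Subtype.val (S.bN.sum_repr ⟨n, hn⟩)
  have hr' : r = 0 ∨ r = 1 := by omega
  obtain rfl | rfl := hr'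
  · exact ⟨S.bM, ⟨0, hd⟩, 0, by simpa using hsum.symm⟩
  · refine ⟨S.bM, S.f 0, S.bN.repr ⟨n, hn⟩ 0 * S.a 0, ?_⟩
    rw [mul_smul, ← S.snf 0]
    simpa using hsum.symm

/-! ### Coboundaries over a rotation of the circle -/

/-- The case `g ≥ 0` of `telescope_int`: the sum of the coboundary
`u ↦ ⌈g a - u⌉ - ⌈-u⌉` along an orbit of the rotation by `a` grows linearly, up to `g`. -/
lemma telescope_nat (a y : ℝ) (T g : ℕ) :
    |∑ k ∈ Finset.range T, ((⌈g * a - (y + k * a)⌉ : ℝ) - ⌈-(y + k * a)⌉) - T * (g * a)| ≤ g := by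
  induction g with
  | zero => simp
  | succ g ih =>
    have key : ∑ k ∈ Finset.range T, ((⌈((g + 1 : ℕ) : ℝ) * a - (y + k * a)⌉ : ℝ)
          - ⌈-(y + k * a)⌉)
        = ∑ k ∈ Finset.range T, ((⌈g * a - (y + k * a)⌉ : ℝ) - ⌈-(y + k * a)⌉)
          + ((⌈(g + 1) * a - y⌉ : ℝ) - ⌈(g + 1) * a - y - T * a⌉) := by
      have h := Finset.sum_range_sub' (fun k : ℕ => (⌈(g + 1) * a - y - k * a⌉ : ℝ)) T
      simp only [Nat.cast_zero, zero_mul, sub_zero] at h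
      rw [← h, ← Finset.sum_add_distrib]
      refine Finset.sum_congr rfl fun k _ => ?_
      have e1 : ((g + 1 : ℕ) : ℝ) * a - (y + k * a) = (g + 1) * a - y - k * a := by
        push_cast; ring
      have e2 : (g : ℝ) * a - (y + k * a) = (g + 1) * a - y - (k + 1 : ℕ) * a := by
        push_cast; ring
      rw [e1, e2]
      ring
    rw [key, abs_le] at *
    have h1 := Int.le_ceil ((g + 1) * a - y)
    have h2 := Int.ceil_lt_add_one ((g + 1) * a - y)
    have h3 := Int.le_ceil ((g + 1) * a - y - T * a)
    have h4 := Int.ceil_lt_add_one ((g + 1) * a - y - T * a)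
    push_cast
    constructor <;> nlinarith [ih.1, ih.2]

/-- The coboundary `u ↦ ⌈g a - u⌉ - ⌈-u⌉`, of mean `g a`, has discrepancy at most `|g|` along
every orbit of the rotation by `a`. -/
lemma telescope_int (a y : ℝ) (T : ℕ) (g : ℤ) :
    |∑ k ∈ Finset.range T, ((⌈g * a - (y + k * a)⌉ : ℝ) - ⌈-(y + k * a)⌉) - T * (g * a)|
      ≤ |(g : ℝ)| := by
  obtain ⟨m, rfl | rfl⟩ := g.eq_nat_or_neg
  · simpa using telescope_nat a y T m
  -- For negative `g`, the base point is moved by `g * a`, which exchanges the two ceilings.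
  · have h := telescope_nat a (y + m * a) T m
    rw [abs_sub_comm] at h
    have e : |((-(m : ℤ) : ℤ) : ℝ)| = m := by simp
    rw [e]
    refine le_of_eq_of_le ?_ h
    congr 1
    have : ∑ k ∈ Finset.range T, ((⌈((-(m : ℤ) : ℤ) : ℝ) * a - (y + k * a)⌉ : ℝ)
          - ⌈-(y + k * a)⌉)
        = -∑ k ∈ Finset.range T, ((⌈m * a - (y + m * a + k * a)⌉ : ℝ)
          - ⌈-(y + m * a + k * a)⌉) := by
      rw [← Finset.sum_neg_distrib]
      refine Finset.sum_congr rfl fun k _ => ?_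
      have e1 : ((-(m : ℤ) : ℤ) : ℝ) * a - (y + k * a) = -(y + m * a + k * a) := by
        push_cast; ring
      have e2 : (m : ℝ) * a - (y + m * a + k * a) = -(y + k * a) := by ring
      rw [e1, e2]
      ring
    rw [this]
    push_cast
    ring

/-! ### Volume and multiplicity of a parallelepiped -/

/-- A parallelepiped has volume the absolute value of the determinant of its edges. -/
lemma volume_paral {d : ℕ} (v : Fin d → Fin d → ℝ) (hv : (Matrix.of v).det ≠ 0) :
    (volume (paral v)).toReal = |(Matrix.of v).det| := by
  have hli : LinearIndependent ℝ v := Matrix.linearIndependent_rows_of_det_ne_zero hv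
  let b : Module.Basis (Fin d) ℝ (Fin d → ℝ) := basisOfLinearIndependentOfCardEqFinrank' v hli
    (by simp)
  have hb : ⇑b = v := by simp [b]
  have hP : paral v = ZSpan.fundamentalDomain b := by
    ext x
    rw [ZSpan.mem_fundamentalDomain]
    constructor
    · rintro ⟨t, ht, rfl⟩ i
      rw [← hb, b.repr_sum_self]
      exact ht i
    · intro h
      exact ⟨fun i => b.repr x i, h, by rw [← hb, b.sum_repr]⟩
  rw [hP, ZSpan.volume_fundamentalDomain, hb, ENNReal.toReal_ofReal (abs_nonneg _)]

/-- Membership in a parallelepiped in linear coordinates `L` in which the edges are the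
coordinate vectors, except for the edge `i₀`, which is a vector `w` with `w i₀ = γ`. -/
lemma mem_paral_iff {d : ℕ} (v : Fin d → Fin d → ℝ) (L : (Fin d → ℝ) →ₗ[ℝ] (Fin d → ℝ))
    (hL : Function.Injective L) (i₀ : Fin d) (w : Fin d → ℝ) (γ : ℝ) (hγ : 0 < γ)
    (hw : w i₀ = γ) (hv₀ : L (v i₀) = w) (hv : ∀ j ≠ i₀, L (v j) = Pi.single j 1)
    (x : Fin d → ℝ) :
    x ∈ paral v ↔ (0 ≤ L x i₀ ∧ L x i₀ < γ) ∧
      ∀ j ≠ i₀, 0 ≤ L x j - L x i₀ / γ * w j ∧ L x j - L x i₀ / γ * w j < 1 := by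
  have hsum : ∀ t : Fin d → ℝ, ∀ j, L (∑ k, t k • v k) j
      = t i₀ * w j + if j = i₀ then 0 else t j := by
    intro t j
    rw [map_sum, Finset.sum_apply, ← Finset.add_sum_erase _ _ (Finset.mem_univ i₀)]
    simp only [map_smul, hv₀, Pi.smul_apply, smul_eq_mul]
    congr 1
    have : ∀ k ∈ Finset.univ.erase i₀, t k * L (v k) j = if j = k then t k else 0 := by
      intro k hk
      rw [hv k (Finset.ne_of_mem_erase hk), Pi.single_apply]
      simp
    rw [Finset.sum_congr rfl this, Finset.sum_ite_eq]
    by_cases hj : j = i₀ <;> simp [hj]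
  constructor
  · rintro ⟨t, ht, rfl⟩
    have h0 : L (∑ k, t k • v k) i₀ = t i₀ * γ := by rw [hsum]; simp [hw]
    have h1 : L (∑ k, t k • v k) i₀ / γ = t i₀ := by rw [h0]; field_simp
    refine ⟨?_, fun j hj => ?_⟩
    · rw [h0]
      have := ht i₀
      constructor <;> nlinarith
    · rw [h1, hsum]
      simpa [hj] using ht j
  · rintro ⟨h0, h1⟩
    refine ⟨fun j => if j = i₀ then L x i₀ / γ else L x j - L x i₀ / γ * w j, fun k => ?_,
      hL ?_⟩
    · by_cases hk : k = i₀
      · simp only [hk, if_true]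
        exact ⟨div_nonneg h0.1 hγ.le, (div_lt_one hγ).2 h0.2⟩
      · simpa only [hk, if_false] using h1 k hk
    · funext j
      rw [hsum]
      by_cases hj : j = i₀
      · subst hj
        simp [hw, hγ.ne']
      · simp [hj]

/-- If the coordinates `L` are given by `C ∈ GL_d(ℤ)`, then over each point there is exactly one
integer translate in the parallelepiped for each admissible integer value of the coordinate `i₀`,
so the multiplicity function counts the integers in `[-L x i₀, γ - L x i₀)`. -/
lemma multFn_paral {d : ℕ} (v : Fin d → Fin d → ℝ) (L : (Fin d → ℝ) →ₗ[ℝ] (Fin d → ℝ))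
    (hL : Function.Injective L) (i₀ : Fin d) (w : Fin d → ℝ) (γ : ℝ) (hγ : 0 < γ)
    (hw : w i₀ = γ) (hv₀ : L (v i₀) = w) (hv : ∀ j ≠ i₀, L (v j) = Pi.single j 1)
    (C D : Matrix (Fin d) (Fin d) ℤ) (hCD : C * D = 1) (hDC : D * C = 1)
    (hLC : ∀ k : Fin d → ℤ, ∀ i, L (fun i => (k i : ℝ)) i = (C.mulVec k i : ℤ))
    (x : Fin d → ℝ) :
    multFn (paral v) x = (⌈γ - L x i₀⌉ : ℝ) - ⌈-L x i₀⌉ := by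
  classical
  -- The coordinates of the unique translate whose coordinate `i₀` is shifted by `s`.
  let m : ℤ → Fin d → ℤ := fun s j =>
    if j = i₀ then s else -⌊L x j - (L x i₀ + s) / γ * w j⌋
  let φ : ℤ → Fin d → ℤ := fun s => D.mulVec (m s)
  have hφ : Function.Injective φ := by
    intro s s' h
    have h2 := congrArg C.mulVec h
    simp only [φ, Matrix.mulVec_mulVec, hCD, Matrix.one_mulVec] at h2
    simpa [m] using congrFun h2 i₀
  let F : Finset (Fin d → ℤ) := (Finset.Ico ⌈-L x i₀⌉ ⌈γ - L x i₀⌉).image φ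
  have hmem : ∀ k : Fin d → ℤ, (x + fun i => (k i : ℝ)) ∈ paral v ↔ k ∈ F := by
    intro k
    have hk : ∀ s, φ s = k ↔ m s = C.mulVec k := by
      intro s
      constructor
      · rintro rfl
        simp [φ, Matrix.mulVec_mulVec, hCD]
      · intro h
        simp [φ, h, Matrix.mulVec_mulVec, hDC]
    rw [mem_paral_iff v L hL i₀ w γ hγ hw hv₀ hv]
    simp only [F, Finset.mem_image, Finset.mem_Ico, hk, map_add, Pi.add_apply, hLC]
    constructor
    · rintro ⟨⟨h0, h0'⟩, h1⟩
      refine ⟨C.mulVec k i₀, ⟨Int.ceil_le.2 (by linarith), Int.lt_ceil.2 (by linarith)⟩, ?_⟩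
      funext j
      by_cases hj : j = i₀
      · simp [m, hj]
      · simp only [m, hj, if_false]
        have := h1 j hj
        rw [neg_eq_iff_eq_neg, Int.floor_eq_iff]
        push_cast
        constructor <;> linarith
    · rintro ⟨s, ⟨hs, hs'⟩, h⟩
      have hs0 : C.mulVec k i₀ = s := by rw [← h]; simp [m]
      rw [hs0]
      rw [Int.ceil_le] at hs
      rw [Int.lt_ceil] at hs'
      refine ⟨⟨by linarith, by linarith⟩, fun j hj => ?_⟩
      rw [← h]
      simp only [m, hj, if_false]
      push_cast
      have h1 := Int.floor_le (L x j - (L x i₀ + s) / γ * w j)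
      have h2 := Int.lt_floor_add_one (L x j - (L x i₀ + s) / γ * w j)
      constructor <;> linarith
  have hle : ⌈-L x i₀⌉ ≤ ⌈γ - L x i₀⌉ := Int.ceil_mono (by linarith)
  unfold multFn
  rw [tsum_eq_sum (s := F) fun k hk => Set.indicator_of_notMem (fun h => hk ((hmem k).1 h)) _,
    Finset.sum_congr rfl fun k hk => Set.indicator_of_mem ((hmem k).2 hk) _,
    Finset.sum_const, nsmul_eq_mul, mul_one, Finset.card_image_of_injective _ hφ, Int.card_Ico]
  have h := Int.toNat_of_nonneg (sub_nonneg.2 hle)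
  exact_mod_cast h

/-! ### Construction of the edges -/

/-- For every positive `γ = n₀ + Σ nᵢαᵢ` there is a parallelepiped spanned by
linearly independent vectors in `ℤα + ℤ^d` of measure `γ` (hence a BRS); moreover if
`γ ≤ 1` it may be chosen simple. -/
theorem stmt2 {d : ℕ} (hd : 1 ≤ d) (α : Fin d → ℝ) (hα : IsIrrationalVector α)
    (γ : ℝ) (hγ : 0 < γ) (n₀ : ℤ) (n : Fin d → ℤ)
    (hform : γ = (n₀ : ℝ) + ∑ i, (n i : ℝ) * α i) :
    ∃ v : Fin d → Fin d → ℝ, LinearIndependent ℝ v ∧ (∀ k, v k ∈ lat α) ∧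
      (volume (paral v)).toReal = γ ∧ IsBRS α (paral v) ∧
      (γ ≤ 1 → ∀ x, multFn (paral v) x = 0 ∨ multFn (paral v) x = 1) := by
  obtain ⟨C, D, i₀, g, hCD, hDC, hn⟩ := exists_unimodular_row hd n
  let R : ℤ →+* ℝ := Int.castRingHom ℝ
  let L : (Fin d → ℝ) →ₗ[ℝ] (Fin d → ℝ) := Matrix.toLin' (C.map R)
  have hCD' : C.map R * D.map R = 1 := by
    rw [← Matrix.map_mul, hCD, Matrix.map_one _ R.map_zero R.map_one]
  have hDC' : D.map R * C.map R = 1 := by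
    rw [← Matrix.map_mul, hDC, Matrix.map_one _ R.map_zero R.map_one]
  have hL : Function.Injective L := by
    refine Function.LeftInverse.injective (g := (D.map R).mulVec) fun x => ?_
    simp [L, Matrix.mulVec_mulVec, hDC']
  have hLC : ∀ k : Fin d → ℤ, ∀ i, L (fun i => (k i : ℝ)) i = (C.mulVec k i : ℤ) := by
    intro k i
    simp [L, R, Matrix.mulVec, dotProduct]
  have hLD : ∀ j, L (fun i => (D i j : ℝ)) = Pi.single j 1 := by
    intro j
    funext i
    have h : (C * D) i j = C.mulVec (fun i => D i j) i := rfl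
    rw [hLC, ← h, hCD, Matrix.one_apply, Pi.single_apply]
    simp
  have hγa : γ = n₀ + g * L α i₀ := by
    rw [hform]
    simp [L, R, Matrix.mulVec, dotProduct, Finset.mul_sum, hn, mul_assoc]
  -- In the coordinates `L` the edges are the coordinate vectors, except the edge `i₀`, which is
  -- `g • L α + n₀ • e_{i₀}` and has `i₀`-th coordinate `γ`.
  let v : Fin d → Fin d → ℝ := fun j =>
    if j = i₀ then (g : ℝ) • α + fun i => ((n₀ * D i i₀ : ℤ) : ℝ) else fun i => (D i j : ℝ)
  let w : Fin d → ℝ := (g : ℝ) • L α + (n₀ : ℝ) • Pi.single i₀ 1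
  have hw : w i₀ = γ := by simp [w, hγa, add_comm]
  have hv : ∀ j ≠ i₀, L (v j) = Pi.single j 1 := by
    intro j hj
    simp only [v, hj, if_false, hLD]
  have hv₀ : L (v i₀) = w := by
    have : (fun i => ((n₀ * D i i₀ : ℤ) : ℝ)) = (n₀ : ℝ) • fun i => (D i i₀ : ℝ) := by
      funext i; simp
    simp only [v, if_true, this, map_add, map_smul, hLD, w]
  have hdetmul : Matrix.of v * (C.map R).transpose = Matrix.updateRow 1 i₀ w := by
    ext j i
    have h : (Matrix.of v * (C.map R).transpose) j i = L (v j) i := by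
      simp [L, Matrix.mul_apply, Matrix.mulVec, dotProduct, mul_comm]
    rw [h]
    by_cases hj : j = i₀
    · rw [hj, hv₀, Matrix.updateRow_self]
    · rw [hv j hj, Matrix.updateRow_ne hj, Matrix.one_apply, Pi.single_apply]
      simp [eq_comm]
  have hdetU : (Matrix.updateRow (1 : Matrix (Fin d) (Fin d) ℝ) i₀ w).det = γ := by
    rw [← Matrix.cramer_transpose_apply, Matrix.transpose_one, Matrix.cramer_one]
    exact hw
  have hdetC : |(C.map R).det| = 1 := by
    have hC : IsUnit C.det := Matrix.isUnit_det_of_right_inverse hCD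
    have h : (C.map R).det = ((C.det : ℤ) : ℝ) := (RingHom.map_det R C).symm
    rw [h]
    exact_mod_cast Int.isUnit_iff_abs_eq.1 hC
  have hdet : |(Matrix.of v).det| = γ := by
    have h := congrArg (fun M => |Matrix.det M|) hdetmul
    simpa only [Matrix.det_mul, Matrix.det_transpose, abs_mul, hdetC, mul_one, hdetU,
      abs_of_pos hγ] using h
  have hdet0 : (Matrix.of v).det ≠ 0 := by
    rw [← abs_pos, hdet]
    exact hγ
  have hvol : (volume (paral v)).toReal = γ := (volume_paral v hdet0).trans hdet
  have hmult := multFn_paral v L hL i₀ w γ hγ hw hv₀ hv C D hCD hDC hLC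
  refine ⟨v, Matrix.linearIndependent_rows_of_det_ne_zero hdet0, fun k => ?_, hvol, ?_, ?_⟩
  · by_cases hk : k = i₀
    · exact ⟨g, fun i => n₀ * D i i₀, by simp only [v, hk, if_true]⟩
    · exact ⟨0, fun i => D i k, by simp [v, hk]⟩
  · refine ⟨|(g : ℝ)|, Filter.Eventually.of_forall fun x T _ => ?_⟩
    refine le_of_eq_of_le ?_ (telescope_int (L α i₀) (L x i₀) T g)
    have hterm : ∀ k : ℕ, multFn (paral v) (x + (k : ℝ) • α)
        = n₀ + ((⌈g * L α i₀ - (L x i₀ + k * L α i₀)⌉ : ℝ) - ⌈-(L x i₀ + k * L α i₀)⌉) := by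
      intro k
      rw [hmult, map_add, map_smul, Pi.add_apply, Pi.smul_apply, smul_eq_mul]
      have : γ - (L x i₀ + k * L α i₀) = n₀ + (g * L α i₀ - (L x i₀ + k * L α i₀)) := by
        rw [hγa]; ring
      rw [this, Int.ceil_intCast_add]
      push_cast
      ring
    unfold disc
    rw [hvol, Finset.sum_congr rfl fun k _ => hterm k, Finset.sum_add_distrib, Finset.sum_const,
      Finset.card_range, nsmul_eq_mul]
    congr 1
    linear_combination (-(T : ℝ)) * hγa
  · intro hγ1 x
    rw [hmult]
    have h1 : ⌈-L x i₀⌉ ≤ ⌈γ - L x i₀⌉ := Int.ceil_mono (by linarith)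
    have h2 : ⌈γ - L x i₀⌉ ≤ ⌈-L x i₀⌉ + 1 := by
      rw [← Int.ceil_add_one]
      exact Int.ceil_mono (by linarith)
    have h3 : ⌈γ - L x i₀⌉ - ⌈-L x i₀⌉ = 0 ∨ ⌈γ - L x i₀⌉ - ⌈-L x i₀⌉ = 1 := by omega
    exact_mod_cast h3
end

section
/- Let α be an irrational vector in ℝ^d, and let S and S′ be two Riemann measurable bounded remainder sets with respect to α having the same Lebesgue measure. Then S and S′ are equidecomposable by Riemann measurable pieces using only translations by vectors belonging to ℤα + ℤ^d. -/
/-!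
Write `f = χ_S - χ_{S'}` and, for a point `x`, consider the walk `n ↦ ∑_{k<n} f(x + kα)`. Since the
two sets have the same measure, both bounded remainder hypotheses together bound this walk, almost
everywhere, by a constant independent of `x` and `n`.

The equidecomposition is a greedy matching. Enumerate the translations `qα + p`, with `0 ≤ q < Q`
and `p` in a large box, in order of nondecreasing `q`, and for each of them in turn translate every
still unmatched point of `S` which lands on a still unmatched point of `S'`. The pieces are obtained
from `S` and `S'` by translations and Boolean operations, so they are Riemann measurable, and the
two unmatched parts always have equal measure. It remains to see that the unmatched part of `S` is
null once `Q` is large.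

A point of `S` that stays unmatched is a point from which the walk stays `≥ 1` up to time `Q`
(`unmatched_subset`): as in matching parentheses, every point of `S'` on its orbit up to a given
time has been matched with a different point of `S` on the same stretch of orbit.

The set of points whose walk stays `≥ 1` up to time `Q` is null for some `Q`
(`exists_positiveSet_null`). Otherwise, all of these sets have nonempty interior, because the walk
is locally constant almost everywhere. By Kronecker's theorem and compactness, every orbit enters
each of these interiors within bounded time (`orbit_syndetic`). Visits can thus be stacked on an
open set of starting points, each one raising the walk by at least one for as long as needed
(`stack`), which contradicts its boundedness.

Kronecker's theorem (`orbit_torus`) is proved by Weyl's method, comparing sums of a bump function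
along the orbit with those of an approximating trigonometric polynomial.
-/


open MeasureTheory

namespace BRS
open UnitAddTorus

/-! ### Density of irrational orbits -/

instance unitAddCircle_isProbabilityMeasure :
    IsProbabilityMeasure (volume : Measure UnitAddCircle) :=
  ⟨by rw [AddCircle.measure_univ, ENNReal.ofReal_one]⟩

/-- The projection `ℝ^d → ℝ^d/ℤ^d`. -/
def toTorus {d : ℕ} (x : Fin d → ℝ) : UnitAddTorus (Fin d) := fun i => (x i : UnitAddCircle)

lemma mFourier_add_arg {d : ℕ} (n : Fin d → ℤ) (x y : UnitAddTorus (Fin d)) :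
    mFourier n (x + y) = mFourier n x * mFourier n y := by
  simp only [mFourier, ContinuousMap.coe_mk, Pi.add_apply, fourier_apply, ← Finset.prod_mul_distrib,
    smul_add, AddCircle.toCircle_add, Circle.coe_mul]

lemma mFourier_nsmul_arg {d : ℕ} (n : Fin d → ℤ) (x : UnitAddTorus (Fin d)) (k : ℕ) :
    mFourier n (k • x) = mFourier n x ^ k := by
  induction k with
  | zero => simp [mFourier]
  | succ k ih => rw [succ_nsmul, mFourier_add_arg, ih, pow_succ]

/-- Irrationality of `α` means exactly that no nontrivial character is trivial at `α`. -/
lemma mFourier_ne_one {d : ℕ} {α : Fin d → ℝ} (hα : IsIrrationalVector α) {n : Fin d → ℤ}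
    (hn : n ≠ 0) : mFourier n (toTorus α) ≠ 1 := by
  intro h
  simp only [mFourier, ContinuousMap.coe_mk, toTorus, fourier_coe_apply, ← Complex.exp_sum] at h
  obtain ⟨m, hm⟩ := Complex.exp_eq_one_iff.1 h
  have h2 : ∑ i, (n i : ℂ) * (α i : ℂ) = m := by
    have hpi : (2 * Real.pi * Complex.I : ℂ) ≠ 0 := Complex.two_pi_I_ne_zero
    apply mul_left_cancel₀ hpi
    rw [mul_comm _ (m : ℂ), ← hm, Finset.mul_sum]
    refine Finset.sum_congr rfl fun i _ => ?_
    push_cast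
    ring
  have h3 : ∑ i, (n i : ℝ) * α i = m := by exact_mod_cast h2
  refine hn (hα (-m) n ?_).2
  rw [h3]
  simp

lemma integral_mFourier {d : ℕ} {a : UnitAddTorus (Fin d)} {n : Fin d → ℤ}
    (h : mFourier n a ≠ 1) : ∫ x : UnitAddTorus (Fin d), mFourier n x = 0 := by
  have h1 := integral_add_right_eq_self (μ := (volume : Measure (UnitAddTorus (Fin d))))
    (fun x => mFourier n x) a
  simp only [mFourier_add_arg, integral_mul_const] at h1
  have h2 : (∫ x : UnitAddTorus (Fin d), mFourier n x) * (mFourier n a - 1) = 0 := by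
    rw [mul_sub, h1]; simp
  exact (mul_eq_zero.1 h2).resolve_right (sub_ne_zero.2 h)

lemma integrable_cont {d : ℕ} (P : C(UnitAddTorus (Fin d), ℂ)) : Integrable (fun x => P x) volume :=
  P.continuous.integrable_of_hasCompactSupport (HasCompactSupport.of_compactSpace _)

/-- Weyl sums of a trigonometric polynomial differ from their main term by a bounded amount. -/
lemma weyl_span {d : ℕ} {α : Fin d → ℝ} (hα : IsIrrationalVector α) (y : UnitAddTorus (Fin d))
    (P : C(UnitAddTorus (Fin d), ℂ))
    (hP : P ∈ Submodule.span ℂ (Set.range (mFourier (d := Fin d)))) :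
    ∃ C : ℝ, ∀ N : ℕ,
      ‖∑ k ∈ Finset.range N, P (y + k • toTorus α) - N * ∫ x : UnitAddTorus (Fin d), P x‖ ≤ C := by
  induction hP using Submodule.span_induction with
  | mem P hP =>
    obtain ⟨n, rfl⟩ := hP
    by_cases hn : n = 0
    · subst hn
      exact ⟨0, fun N => by simp [mFourier_zero]⟩
    · have h1 := mFourier_ne_one hα hn
      have hnorm : ∀ z, ‖mFourier n z‖ ≤ 1 := fun z =>
        ((mFourier n).norm_coe_le_norm z).trans mFourier_norm.le
      refine ⟨2 / ‖mFourier n (toTorus α) - 1‖, fun N => ?_⟩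
      rw [integral_mFourier h1, mul_zero, sub_zero]
      simp only [mFourier_add_arg, mFourier_nsmul_arg, ← Finset.mul_sum, geom_sum_eq h1]
      rw [norm_mul, norm_div, ← mFourier_nsmul_arg]
      have h3 : ‖mFourier n (N • toTorus α) - 1‖ ≤ 2 := by
        refine (norm_sub_le _ _).trans ?_
        have := hnorm (N • toTorus α)
        rw [norm_one]
        linarith
      calc _ ≤ 1 * (2 / ‖mFourier n (toTorus α) - 1‖) := by
            gcongr
            exact hnorm y
        _ = _ := one_mul _
  | zero => exact ⟨0, fun N => by simp⟩
  | add P Q _ _ hP hQ =>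
    obtain ⟨C, hC⟩ := hP
    obtain ⟨D, hD⟩ := hQ
    refine ⟨C + D, fun N => ?_⟩
    have := norm_add_le_of_le (hC N) (hD N)
    refine le_of_eq_of_le (congrArg norm ?_) this
    simp only [ContinuousMap.add_apply, Finset.sum_add_distrib]
    rw [integral_add (integrable_cont P) (integrable_cont Q)]
    ring
  | smul a P _ hP =>
    obtain ⟨C, hC⟩ := hP
    refine ⟨‖a‖ * C, fun N => ?_⟩
    have := mul_le_mul_of_nonneg_left (hC N) (norm_nonneg a)
    rw [← norm_mul] at this
    refine le_of_eq_of_le (congrArg norm ?_) this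
    simp only [ContinuousMap.smul_apply, smul_eq_mul, ← Finset.mul_sum, integral_const_mul]
    ring

/-- Kronecker's theorem: forward orbits of an irrational rotation of the torus are dense. -/
lemma orbit_torus {d : ℕ} {α : Fin d → ℝ} (hα : IsIrrationalVector α) (y : UnitAddTorus (Fin d))
    {W : Set (UnitAddTorus (Fin d))} (hW : IsOpen W) (hne : W.Nonempty) :
    ∃ k : ℕ, y + k • toTorus α ∈ W := by
  by_contra! hcon
  obtain ⟨w, hw⟩ := hne
  obtain ⟨g, hg0, hg1, hg⟩ := exists_continuous_zero_one_of_isClosed hW.isClosed_compl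
    (isClosed_singleton (x := w)) (by simpa using hw)
  have hpos : 0 < ∫ x, g x := by
    refine g.continuous.integral_pos_of_hasCompactSupport_nonneg_nonzero
      (HasCompactSupport.of_compactSpace _) (fun x => (hg x).1) (x := w) ?_
    rw [hg1 rfl]
    simp
  set I := ∫ x, g x with hI
  let G : C(UnitAddTorus (Fin d), ℂ) := ⟨fun x => (g x : ℂ), by fun_prop⟩
  have hGI : ∫ x, G x = (I : ℂ) := integral_ofReal
  have hG : G ∈ (Submodule.span ℂ (Set.range (mFourier (d := Fin d)))).topologicalClosure := by
    rw [span_mFourier_closure_eq_top]; trivial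
  obtain ⟨P, hP, hPG⟩ := Metric.mem_closure_iff.1 hG (I / 3) (by positivity)
  rw [dist_eq_norm] at hPG
  have hpt : ∀ x, ‖G x - P x‖ ≤ I / 3 := fun x => ((G - P).norm_coe_le_norm x).trans hPG.le
  obtain ⟨C, hC⟩ := weyl_span hα y P hP
  have h1 : ‖(I : ℂ) - ∫ x, P x‖ ≤ I / 3 := by
    rw [← hGI, ← integral_sub (integrable_cont G) (integrable_cont P)]
    refine (norm_integral_le_of_norm_le_const (Filter.Eventually.of_forall hpt)).trans ?_
    simp
  have h2 : ∀ N : ℕ, ‖∑ k ∈ Finset.range N, P (y + k • toTorus α)‖ ≤ N * (I / 3) := by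
    intro N
    refine (norm_sum_le _ _).trans ?_
    refine (Finset.sum_le_card_nsmul _ _ (I / 3) fun k _ => ?_).trans (by simp)
    have h := hpt (y + k • toTorus α)
    have h0 : G (y + k • toTorus α) = 0 := by
      have : g (y + k • toTorus α) = 0 := hg0 (hcon k)
      simp [G, this]
    rw [h0, zero_sub, norm_neg] at h
    exact h
  obtain ⟨N, hN⟩ := exists_nat_gt (C / (I / 3))
  rw [div_lt_iff₀ (by positivity)] at hN
  have h3 : ‖(N : ℂ) * I‖ ≤ C + N * (I / 3) + N * (I / 3) := by
    have e : (N : ℂ) * I = -(∑ k ∈ Finset.range N, P (y + k • toTorus α) - N * ∫ x, P x)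
        + ∑ k ∈ Finset.range N, P (y + k • toTorus α) + N * ((I : ℂ) - ∫ x, P x) := by ring
    rw [e]
    refine norm_add_le_of_le (norm_add_le_of_le ?_ (h2 N)) ?_
    · rw [norm_neg]; exact hC N
    · rw [norm_mul, Complex.norm_natCast]; gcongr
  rw [norm_mul, Complex.norm_natCast, Complex.norm_real, Real.norm_of_nonneg hpos.le] at h3
  linarith

lemma orbit_dense {d : ℕ} {α : Fin d → ℝ} (hα : IsIrrationalVector α) (x : Fin d → ℝ)
    {V : Set (Fin d → ℝ)} (hV : IsOpen V) (hne : V.Nonempty) :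
    ∃ (t : ℕ) (p : Fin d → ℤ), (x + (t : ℝ) • α + fun i => (p i : ℝ)) ∈ V := by
  have hopen : IsOpenMap (toTorus (d := d)) := by
    refine IsOpenMap.piMap (fun _ => QuotientAddGroup.isOpenMap_coe) (by simp)
  obtain ⟨k, v, hv, hk⟩ := orbit_torus hα (toTorus x) (hopen V hV) (hne.image _)
  have hc : ∀ i, ∃ p : ℤ, v i = x i + k * α i + p := by
    intro i
    have h := congrFun hk i
    simp only [toTorus, Pi.add_apply, Pi.smul_apply] at h
    rw [← AddCircle.coe_nsmul, ← AddCircle.coe_add, ← sub_eq_zero, ← AddCircle.coe_sub,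
      AddCircle.coe_eq_zero_iff] at h
    obtain ⟨m, hm⟩ := h
    refine ⟨m, ?_⟩
    simp at hm
    linarith
  choose p hp using hc
  refine ⟨k, p, ?_⟩
  convert hv using 1
  ext i
  simp [hp i]

/-- Every orbit enters a given nonempty open set modulo `ℤ^d` within a uniformly bounded time. -/
lemma orbit_syndetic {d : ℕ} {α : Fin d → ℝ} (hα : IsIrrationalVector α)
    {V : Set (Fin d → ℝ)} (hV : IsOpen V) (hne : V.Nonempty) :
    ∃ L : ℕ, ∀ x : Fin d → ℝ, ∃ t ≤ L, ∃ p : Fin d → ℤ,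
      (x + (t : ℝ) • α + fun i => (p i : ℝ)) ∈ V := by
  let O : ℕ → Set (Fin d → ℝ) := fun t =>
    ⋃ p : Fin d → ℤ, (fun x => x + (t : ℝ) • α + fun i => (p i : ℝ)) ⁻¹' V
  have hO : ∀ t, IsOpen (O t) := fun t => isOpen_iUnion fun p => hV.preimage (by fun_prop)
  obtain ⟨T, hT⟩ := (isCompact_Icc (a := (0 : Fin d → ℝ)) (b := 1)).elim_finite_subcover O hO
    (fun x _ => by
      obtain ⟨t, p, h⟩ := orbit_dense hα x hV hne
      exact Set.mem_iUnion.2 ⟨t, Set.mem_iUnion.2 ⟨p, h⟩⟩)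
  refine ⟨T.sup id, fun x => ?_⟩
  have hx : (fun i => Int.fract (x i)) ∈ Set.Icc (0 : Fin d → ℝ) 1 :=
    ⟨fun i => Int.fract_nonneg _, fun i => (Int.fract_lt_one _).le⟩
  obtain ⟨t, ht, hxt⟩ := Set.mem_iUnion₂.1 (hT hx)
  obtain ⟨p, hp⟩ := Set.mem_iUnion.1 hxt
  refine ⟨t, Finset.le_sup (f := id) ht, fun i => p i - ⌊x i⌋, ?_⟩
  have hp' : _ ∈ V := hp
  convert hp' using 1
  ext i
  simp only [Pi.add_apply, Pi.smul_apply, Int.fract]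
  push_cast
  ring
/-! ### Multiplicities and the walk of partial sums -/

/-- The integer vector `p`, viewed in `ℝ^d`. -/
abbrev toR {d : ℕ} (p : Fin d → ℤ) : Fin d → ℝ := fun i => (p i : ℝ)

/-- The Birkhoff sum `∑_{k<n} (χ_S - χ_{S'})(x + kα)`. -/
noncomputable def excess {d : ℕ} (α : Fin d → ℝ) (S S' : Set (Fin d → ℝ)) (n : ℕ)
    (x : Fin d → ℝ) : ℝ :=
  ∑ k ∈ Finset.range n, (multFn S (x + (k : ℝ) • α) - multFn S' (x + (k : ℝ) • α))

lemma exists_box {d : ℕ} {S : Set (Fin d → ℝ)} (hS : Bornology.IsBounded S) (ρ : ℝ) :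
    ∃ B : Finset (Fin d → ℤ), ∀ y : Fin d → ℝ, ‖y‖ ≤ ρ → ∀ p ∉ B, y + toR p ∉ S := by
  obtain ⟨r, hr⟩ := hS.exists_norm_le
  refine ⟨Finset.Icc (fun _ => -⌈r + ρ⌉) (fun _ => ⌈r + ρ⌉), fun y hy p hp hmem => hp ?_⟩
  have h : ∀ i, |(p i : ℝ)| ≤ r + ρ := by
    intro i
    have h1 := (norm_le_pi_norm (y + toR p) i).trans (hr _ hmem)
    have h2 := (norm_le_pi_norm y i).trans hy
    rw [Real.norm_eq_abs] at h1 h2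
    have e : (p i : ℝ) = (y + toR p) i - y i := by simp [toR]
    rw [e]
    exact (abs_sub _ _).trans (add_le_add h1 h2)
  rw [Finset.mem_Icc]
  refine ⟨fun i => ?_, fun i => ?_⟩
  · have h1 := (neg_le_of_abs_le (h i)).trans' (neg_le_neg (Int.le_ceil (r + ρ)))
    exact_mod_cast h1
  · have h1 := (le_of_abs_le (h i)).trans (Int.le_ceil (r + ρ))
    exact_mod_cast h1

lemma multFn_eq_sum {d : ℕ} {S : Set (Fin d → ℝ)} {B : Finset (Fin d → ℤ)} {y : Fin d → ℝ}
    (h : ∀ p ∉ B, y + toR p ∉ S) :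
    multFn S y = ∑ p ∈ B, Set.indicator S (fun _ => (1 : ℝ)) (y + toR p) :=
  tsum_eq_sum fun p hp => Set.indicator_of_notMem (h p hp) _

lemma multFn_periodic {d : ℕ} (S : Set (Fin d → ℝ)) : IsZdPeriodic (multFn S) := by
  intro x k
  unfold multFn
  rw [← (Equiv.addLeft k).tsum_eq fun p => Set.indicator S (fun _ => (1 : ℝ)) (x + toR p)]
  refine tsum_congr fun p => ?_
  congr 1
  ext i
  simp [toR, add_assoc]

lemma multFn_eventuallyEq {d : ℕ} {S : Set (Fin d → ℝ)} (hS : Bornology.IsBounded S)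
    {x : Fin d → ℝ} (hx : ∀ p, x + toR p ∉ frontier S) :
    ∀ᶠ y in nhds x, multFn S y = multFn S x := by
  obtain ⟨B, hB⟩ := exists_box hS (‖x‖ + 1)
  have h1 : ∀ᶠ y in nhds x, ‖y‖ ≤ ‖x‖ + 1 := by
    filter_upwards [continuous_norm.continuousAt.eventually
      (gt_mem_nhds (lt_add_one ‖x‖))] with y hy using le_of_lt hy
  have h2 : ∀ᶠ y in nhds x, ∀ p ∈ B, (y + toR p ∈ S ↔ x + toR p ∈ S) := by
    rw [Filter.eventually_all_finset]
    intro p _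
    have hc : ContinuousAt (fun y : Fin d → ℝ => y + toR p) x := by fun_prop
    by_cases hm : x + toR p ∈ S
    · have hi : x + toR p ∈ interior S := by
        by_contra hi
        exact hx p ⟨subset_closure hm, hi⟩
      filter_upwards [hc.eventually (mem_interior_iff_mem_nhds.1 hi)] with y hy
      exact ⟨fun _ => hm, fun _ => hy⟩
    · have hi : x + toR p ∉ closure S := fun hi =>
        hx p ⟨hi, fun h => hm (interior_subset h)⟩
      filter_upwards [hc.eventually (isClosed_closure.isOpen_compl.mem_nhds hi)] with y hy
      exact ⟨fun h => absurd (subset_closure h) hy, fun h => absurd h hm⟩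
  filter_upwards [h1, h2] with y hy1 hy2
  rw [multFn_eq_sum (hB y hy1), multFn_eq_sum (hB x (by linarith))]
  refine Finset.sum_congr rfl fun p hp => ?_
  by_cases h : x + toR p ∈ S
  · rw [Set.indicator_of_mem h, Set.indicator_of_mem ((hy2 p hp).2 h)]
  · rw [Set.indicator_of_notMem h, Set.indicator_of_notMem (mt (hy2 p hp).1 h)]

lemma excess_add {d : ℕ} (α : Fin d → ℝ) (S S' : Set (Fin d → ℝ)) (m n : ℕ) (x : Fin d → ℝ) :
    excess α S S' (m + n) x = excess α S S' m x + excess α S S' n (x + (m : ℝ) • α) := by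
  unfold excess
  rw [Finset.sum_range_add]
  congr 1
  refine Finset.sum_congr rfl fun k _ => ?_
  have e : x + ((m + k : ℕ) : ℝ) • α = x + (m : ℝ) • α + (k : ℝ) • α := by
    push_cast
    rw [add_smul, add_assoc]
  rw [e]

lemma excess_periodic {d : ℕ} (α : Fin d → ℝ) (S S' : Set (Fin d → ℝ)) (n : ℕ) :
    IsZdPeriodic (excess α S S' n) := by
  intro x p
  refine Finset.sum_congr rfl fun k _ => ?_
  rw [add_right_comm, multFn_periodic S, multFn_periodic S']

/-! ### The walk returns below one in bounded time -/

/-- The points from which the walk `n ↦ excess n x` stays positive up to time `Q`. -/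
def positiveSet {d : ℕ} (α : Fin d → ℝ) (S S' : Set (Fin d → ℝ)) (Q : ℕ) : Set (Fin d → ℝ) :=
  {x | ∀ n, 1 ≤ n → n ≤ Q → 1 ≤ excess α S S' n x}

/-- Off the countably many translates of the null boundaries, `excess n` is locally constant. -/
lemma ae_excess_eventuallyEq {d : ℕ} (α : Fin d → ℝ) {S S' : Set (Fin d → ℝ)}
    (hS : IsRiemannMeasurable S) (hS' : IsRiemannMeasurable S') :
    ∀ᵐ x : Fin d → ℝ, ∀ n, ∀ᶠ y in nhds x, excess α S S' n y = excess α S S' n x := by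
  have key : ∀ {T : Set (Fin d → ℝ)}, IsRiemannMeasurable T →
      ∀ᵐ x : Fin d → ℝ, ∀ (k : ℕ) (p : Fin d → ℤ), x + (k : ℝ) • α + toR p ∉ frontier T := by
    intro T hT
    rw [ae_all_iff]
    intro k
    rw [ae_all_iff]
    intro p
    rw [ae_iff]
    simp only [not_not, add_assoc]
    exact (measure_preimage_add_right volume ((k : ℝ) • α + toR p) (frontier T)).trans hT.2
  filter_upwards [key hS, key hS'] with x hx hx' n
  have hc : ∀ k : ℕ, ContinuousAt (fun y : Fin d → ℝ => y + (k : ℝ) • α) x := fun k => by fun_prop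
  have h : ∀ᶠ y in nhds x, ∀ k ∈ Finset.range n,
      multFn S (y + (k : ℝ) • α) = multFn S (x + (k : ℝ) • α) ∧
      multFn S' (y + (k : ℝ) • α) = multFn S' (x + (k : ℝ) • α) := by
    rw [Filter.eventually_all_finset]
    intro k _
    exact ((hc k).eventually (multFn_eventuallyEq hS.1 (hx k))).and
      ((hc k).eventually (multFn_eventuallyEq hS'.1 (hx' k)))
  filter_upwards [h] with y hy
  refine Finset.sum_congr rfl fun k hk => ?_
  rw [(hy k hk).1, (hy k hk).2]

lemma interior_positiveSet_nonempty {d : ℕ} (α : Fin d → ℝ) {S S' : Set (Fin d → ℝ)}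
    (hS : IsRiemannMeasurable S) (hS' : IsRiemannMeasurable S') {Q : ℕ}
    (h : volume (positiveSet α S S' Q) ≠ 0) : (interior (positiveSet α S S' Q)).Nonempty := by
  have hfr : ∃ᵐ x : Fin d → ℝ, x ∈ positiveSet α S S' Q := by
    rwa [frequently_ae_mem_iff]
  obtain ⟨x, hx, hloc⟩ := (hfr.and_eventually (ae_excess_eventuallyEq α hS hS')).exists
  refine ⟨x, mem_interior_iff_mem_nhds.2 ?_⟩
  have h2 : ∀ᶠ y in nhds x, ∀ n ∈ Finset.range (Q + 1),
      excess α S S' n y = excess α S S' n x := by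
    rw [Filter.eventually_all_finset]
    exact fun n _ => hloc n
  filter_upwards [h2] with y hy n h1 hn
  rw [hy n (Finset.mem_range.2 (by omega))]
  exact hx n h1 hn

/-- If the walk stays positive for arbitrarily long times on sets of positive measure, then
visits to such sets can be stacked: each visit raises the walk by one for as long as desired. -/
lemma stack {d : ℕ} {α : Fin d → ℝ} (hα : IsIrrationalVector α) {S S' : Set (Fin d → ℝ)}
    (hU : ∀ Q, (interior (positiveSet α S S' Q)).Nonempty) (j : ℕ) :
    ∀ Q : ℕ, ∃ V : Set (Fin d → ℝ), IsOpen V ∧ V.Nonempty ∧ ∃ m : ℕ, 1 ≤ m ∧ ∀ x ∈ V, ∀ n,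
      m ≤ n → n ≤ m + Q → (j : ℝ) ≤ excess α S S' n x := by
  induction j with
  | zero =>
    intro Q
    refine ⟨_, isOpen_interior, hU (Q + 1), 1, le_rfl, fun x hx n h1 h2 => ?_⟩
    have := interior_subset hx n h1 (by omega)
    push_cast
    linarith
  | succ j ih =>
    intro Q
    obtain ⟨L, hL⟩ := orbit_syndetic hα isOpen_interior (hU (Q + 1))
    obtain ⟨V, hV, ⟨x, hx⟩, m, hm, hVm⟩ := ih L
    obtain ⟨t, ht, p, hp⟩ := hL (x + (m : ℝ) • α)
    refine ⟨V ∩ (fun y => y + ((m + t : ℕ) : ℝ) • α + toR p) ⁻¹'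
      interior (positiveSet α S S' (Q + 1)),
      hV.inter (isOpen_interior.preimage (by fun_prop)), ⟨x, hx, ?_⟩, m + t + 1, by omega, ?_⟩
    · have e : x + ((m + t : ℕ) : ℝ) • α = x + (m : ℝ) • α + (t : ℝ) • α := by
        push_cast
        rw [add_smul, add_assoc]
      change x + ((m + t : ℕ) : ℝ) • α + toR p ∈ interior (positiveSet α S S' (Q + 1))
      rw [e]
      exact hp
    · rintro y ⟨hy, hy2⟩ n h1 h2
      obtain ⟨l, rfl⟩ := Nat.exists_eq_add_of_le (show m + t ≤ n by omega)
      rw [excess_add, ← excess_periodic α S S' l _ p]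
      have a1 := hVm y hy (m + t) (by omega) (by omega)
      have a2 := interior_subset hy2 l (by omega) (by omega)
      push_cast at a1 a2 ⊢
      linarith

/-- The walk returns to a nonpositive value within a uniformly bounded time, almost surely. -/
lemma exists_positiveSet_null {d : ℕ} {α : Fin d → ℝ} (hα : IsIrrationalVector α)
    {S S' : Set (Fin d → ℝ)} (hS : IsRiemannMeasurable S) (hS' : IsRiemannMeasurable S')
    (hb : IsBRS α S) (hb' : IsBRS α S') (hvol : volume S = volume S') :
    ∃ Q, volume (positiveSet α S S' Q) = 0 := by
  by_contra! hcon
  obtain ⟨C, hC⟩ := hb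
  obtain ⟨C', hC'⟩ := hb'
  obtain ⟨j, hj⟩ := exists_nat_gt (C + C')
  obtain ⟨V, hV, hne, m, hm, hVm⟩ :=
    stack hα (fun Q => interior_positiveSet_nonempty α hS hS' (hcon Q)) j 0
  have hfr : ∃ᵐ x : Fin d → ℝ, x ∈ V := by
    rw [frequently_ae_mem_iff]
    exact (hV.measure_pos volume hne).ne'
  obtain ⟨x, hx, h1, h2⟩ := (hfr.and_eventually (hC.and hC')).exists
  have e : excess α S S' m x = disc α S m x - disc α S' m x := by
    unfold excess disc
    rw [hvol, Finset.sum_sub_distrib]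
    ring
  have h3 := hVm x hx m le_rfl (by omega)
  have h4 := le_of_abs_le (h1 m hm)
  have h5 := neg_le_of_abs_le (h2 m hm)
  linarith

/-! ### Greedy matching -/

/-- Greedy matching of `S` with `S'` along the translations `γ 0, γ 1, …`: the pair of sets left
unmatched after the first `i` translations have been used, each as much as possible. -/
def greedy {d : ℕ} (γ : ℕ → Fin d → ℝ) (S S' : Set (Fin d → ℝ)) :
    ℕ → Set (Fin d → ℝ) × Set (Fin d → ℝ)
  | 0 => (S, S')
  | i + 1 => ((greedy γ S S' i).1 \ (fun x => x + γ i) ⁻¹' (greedy γ S S' i).2,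
      (greedy γ S S' i).2 \ (fun x => x + -γ i) ⁻¹' (greedy γ S S' i).1)

/-- The part of `S` that the greedy matching translates by `γ i`. -/
def piece {d : ℕ} (γ : ℕ → Fin d → ℝ) (S S' : Set (Fin d → ℝ)) (i : ℕ) : Set (Fin d → ℝ) :=
  (greedy γ S S' i).1 ∩ (fun x => x + γ i) ⁻¹' (greedy γ S S' i).2

section Greedy

variable {d : ℕ} (γ : ℕ → Fin d → ℝ) (S S' : Set (Fin d → ℝ))

lemma image_piece (i : ℕ) : (fun x => x + γ i) '' piece γ S S' i =
    (greedy γ S S' i).2 ∩ (fun x => x + -γ i) ⁻¹' (greedy γ S S' i).1 := by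
  ext y
  constructor
  · rintro ⟨x, ⟨h1, h2⟩, rfl⟩
    exact ⟨h2, by simpa using h1⟩
  · rintro ⟨h1, h2⟩
    exact ⟨y + -γ i, ⟨h2, by simpa using h1⟩, by simp⟩

lemma greedy_fst_succ (i : ℕ) :
    (greedy γ S S' (i + 1)).1 = (greedy γ S S' i).1 \ piece γ S S' i := by
  rw [piece, Set.sdiff_self_inter]; rfl

lemma greedy_snd_succ (i : ℕ) : (greedy γ S S' (i + 1)).2 =
    (greedy γ S S' i).2 \ (fun x => x + γ i) '' piece γ S S' i := by
  rw [image_piece, Set.sdiff_self_inter]; rfl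

lemma greedy_fst_anti : Antitone fun i => (greedy γ S S' i).1 :=
  antitone_nat_of_succ_le fun _ => Set.sdiff_subset

lemma greedy_snd_anti : Antitone fun i => (greedy γ S S' i).2 :=
  antitone_nat_of_succ_le fun _ => Set.sdiff_subset

lemma piece_subset (i : ℕ) : piece γ S S' i ⊆ (greedy γ S S' i).1 := Set.inter_subset_left

lemma image_piece_subset (i : ℕ) :
    (fun x => x + γ i) '' piece γ S S' i ⊆ (greedy γ S S' i).2 := by
  rw [image_piece]; exact Set.inter_subset_left

end Greedy

/-- The sets successively removed from a decreasing sequence are pairwise disjoint. -/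
lemma disjoint_of_removed {X : Type*} {R A : ℕ → Set X} (hA : ∀ i, A i ⊆ R i)
    (hR : ∀ i, R (i + 1) = R i \ A i) {i j : ℕ} (hij : i ≠ j) : A i ∩ A j = ∅ := by
  have hanti : Antitone R := antitone_nat_of_succ_le fun i => by
    rw [hR]; exact Set.sdiff_subset
  have main : ∀ {i j : ℕ}, i < j → A i ∩ A j = ∅ := by
    intro i j h
    rw [← Set.disjoint_iff_inter_eq_empty, Set.disjoint_left]
    intro x hx hx'
    have := hanti (Nat.succ_le_of_lt h) (hA j hx')
    rw [Nat.succ_eq_add_one, hR] at this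
    exact this.2 hx
  rcases lt_or_gt_of_ne hij with h | h
  · exact main h
  · rw [Set.inter_comm]; exact main h

lemma symmDiff_iUnion_removed {X : Type*} {R A : ℕ → Set X} (hA : ∀ i, A i ⊆ R i)
    (hR : ∀ i, R (i + 1) = R i \ A i) (N : ℕ) :
    symmDiff (R 0) (⋃ i : Fin N, A i) = R N := by
  have hanti : Antitone R := antitone_nat_of_succ_le fun i => by
    rw [hR]; exact Set.sdiff_subset
  have h1 : (⋃ i : Fin N, A i) ⊆ R 0 :=
    Set.iUnion_subset fun i => (hA i).trans (hanti (Nat.zero_le _))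
  have h2 : ∀ N, R N = R 0 \ ⋃ i : Fin N, A i := by
    intro N
    induction N with
    | zero => simp
    | succ N ih =>
      rw [hR, ih, Set.sdiff_sdiff]
      congr 1
      ext x
      rw [Set.mem_union, Set.mem_iUnion, Set.mem_iUnion, Fin.exists_fin_succ']
      rfl
  rw [h2 N, Set.symmDiff_def, Set.sdiff_eq_empty.2 h1, Set.union_empty]

lemma riemannMeasurable_inter {d : ℕ} {A B : Set (Fin d → ℝ)} (hA : IsRiemannMeasurable A)
    (hB : volume (frontier B) = 0) : IsRiemannMeasurable (A ∩ B) := by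
  refine ⟨hA.1.subset Set.inter_subset_left, measure_mono_null (frontier_inter_subset A B) ?_⟩
  exact measure_union_null (measure_mono_null Set.inter_subset_left hA.2)
    (measure_mono_null Set.inter_subset_right hB)

lemma riemannMeasurable_sdiff {d : ℕ} {A B : Set (Fin d → ℝ)} (hA : IsRiemannMeasurable A)
    (hB : volume (frontier B) = 0) : IsRiemannMeasurable (A \ B) := by
  rw [Set.sdiff_eq]
  exact riemannMeasurable_inter hA (by rwa [frontier_compl])

lemma frontier_preimage_null {d : ℕ} {A : Set (Fin d → ℝ)} (hA : volume (frontier A) = 0)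
    (v : Fin d → ℝ) : volume (frontier ((fun x => x + v) ⁻¹' A)) = 0 := by
  have h := (Homeomorph.addRight v).preimage_frontier A
  rw [Homeomorph.coe_addRight] at h
  rw [← h, measure_preimage_add_right]
  exact hA

lemma greedy_riemannMeasurable {d : ℕ} (γ : ℕ → Fin d → ℝ) {S S' : Set (Fin d → ℝ)}
    (hS : IsRiemannMeasurable S) (hS' : IsRiemannMeasurable S') (i : ℕ) :
    IsRiemannMeasurable (greedy γ S S' i).1 ∧ IsRiemannMeasurable (greedy γ S S' i).2 := by
  induction i with
  | zero => exact ⟨hS, hS'⟩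
  | succ i ih =>
    constructor
    · exact riemannMeasurable_sdiff ih.1 (frontier_preimage_null ih.2.2 _)
    · exact riemannMeasurable_sdiff ih.2 (frontier_preimage_null ih.1.2 _)

lemma piece_riemannMeasurable {d : ℕ} (γ : ℕ → Fin d → ℝ) {S S' : Set (Fin d → ℝ)}
    (hS : IsRiemannMeasurable S) (hS' : IsRiemannMeasurable S') (i : ℕ) :
    IsRiemannMeasurable (piece γ S S' i) :=
  riemannMeasurable_inter (greedy_riemannMeasurable γ hS hS' i).1
    (frontier_preimage_null (greedy_riemannMeasurable γ hS hS' i).2.2 _)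

/-- The matching is measure preserving, so the two unmatched sets keep equal measures. -/
lemma greedy_volume {d : ℕ} (γ : ℕ → Fin d → ℝ) {S S' : Set (Fin d → ℝ)}
    (hS : IsRiemannMeasurable S) (hS' : IsRiemannMeasurable S') (hvol : volume S = volume S')
    (i : ℕ) : volume (greedy γ S S' i).1 = volume (greedy γ S S' i).2 := by
  induction i with
  | zero => exact hvol
  | succ i ih =>
    have hp := piece_riemannMeasurable γ hS hS' i
    have him : (fun x => x + γ i) '' piece γ S S' i
        = (fun x => x + -γ i) ⁻¹' piece γ S S' i := by
      rw [Set.image_add_right]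
    have hv : volume ((fun x => x + γ i) '' piece γ S S' i) = volume (piece γ S S' i) := by
      rw [him, measure_preimage_add_right]
    rw [greedy_fst_succ, greedy_snd_succ, measure_sdiff (piece_subset γ S S' i)
        (nullMeasurableSet_of_null_frontier hp.2) hp.1.measure_lt_top.ne,
      measure_sdiff (image_piece_subset γ S S' i) _ _, ih, hv]
    · refine nullMeasurableSet_of_null_frontier ?_
      rw [him]
      exact frontier_preimage_null hp.2 _
    · rw [hv]; exact hp.1.measure_lt_top.ne

/-! ### Unmatched points have a positive walk -/

lemma sum_multFn_eq_card {d : ℕ} {α : Fin d → ℝ} {S : Set (Fin d → ℝ)} {B : Finset (Fin d → ℤ)}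
    {s : Fin d → ℝ} {n : ℕ} [DecidablePred (· ∈ S)]
    (h : ∀ k < n, ∀ p ∉ B, s + (k : ℝ) • α + toR p ∉ S) :
    ∑ k ∈ Finset.range n, multFn S (s + (k : ℝ) • α) =
      ((Finset.range n ×ˢ B).filter fun z => s + (z.1 : ℝ) • α + toR z.2 ∈ S).card := by
  rw [Finset.card_filter, Finset.sum_product]
  push_cast
  refine Finset.sum_congr rfl fun k hk => ?_
  rw [multFn_eq_sum (h k (Finset.mem_range.1 hk))]
  refine Finset.sum_congr rfl fun p _ => ?_
  rw [Set.indicator_apply]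

/-- A point `s` of `S` still unmatched after all times below `Q` have been tried has a positive
walk up to time `Q`. Each point of `S'` on the orbit of `s` at time `k < n` could have been
matched with `s`, so it was matched earlier, with a point of `S` at a time in `[0, k]`. This
injects the points of `S'` at times below `n` into the points of `S` other than `s`. -/
lemma unmatched_subset {d : ℕ} {α : Fin d → ℝ} {S S' : Set (Fin d → ℝ)} {Q N : ℕ}
    {B : Finset (Fin d → ℤ)}
    (hB : ∀ s ∈ S, ∀ k < Q, ∀ p ∉ B, s + (k : ℝ) • α + toR p ∉ S ∪ S')
    {q : ℕ → ℕ} {r : ℕ → Fin d → ℤ} (hq : Monotone q)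
    (hqr : ∀ k < Q, ∀ p ∈ B, ∃ i < N, q i = k ∧ r i = p) :
    (greedy (fun i => (q i : ℝ) • α + toR (r i)) S S' N).1 ⊆ positiveSet α S S' Q := by
  classical
  set γ : ℕ → Fin d → ℝ := fun i => (q i : ℝ) • α + toR (r i) with hγ
  intro s hs n hn hnQ
  have hsS : s ∈ S := greedy_fst_anti γ S S' (Nat.zero_le N) hs
  let pt : ℕ × (Fin d → ℤ) → Fin d → ℝ := fun z => s + (z.1 : ℝ) • α + toR z.2
  let T : Set (Fin d → ℝ) → Finset (ℕ × (Fin d → ℤ)) := fun A =>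
    (Finset.range n ×ˢ B).filter fun z => pt z ∈ A
  have hmatch : ∀ z ∈ T S', ∃ i < N, q i ≤ z.1 ∧ pt z + -γ i ∈ piece γ S S' i := by
    intro z hz
    obtain ⟨hz1, hz2⟩ := Finset.mem_filter.1 hz
    obtain ⟨hk, hp⟩ := Finset.mem_product.1 hz1
    obtain ⟨i₀, hi₀, hqi, hri⟩ := hqr z.1 ((Finset.mem_range.1 hk).trans_le hnQ) z.2 hp
    have hnot : pt z ∉ (greedy γ S S' i₀).2 := by
      intro hmem
      have h1 := greedy_fst_anti γ S S' (Nat.succ_le_of_lt hi₀) hs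
      refine h1.2 ?_
      change s + ((q i₀ : ℝ) • α + toR (r i₀)) ∈ (greedy γ S S' i₀).2
      rw [hqi, hri, ← add_assoc]
      exact hmem
    have hex : ∃ i, pt z ∉ (greedy γ S S' i).2 := ⟨i₀, hnot⟩
    have hlt : Nat.find hex ≤ i₀ := Nat.find_min' hex hnot
    have hfind := Nat.find_spec hex
    obtain ⟨i, hi⟩ : ∃ i, Nat.find hex = i + 1 := by
      refine Nat.exists_eq_succ_of_ne_zero fun h0 => ?_
      rw [h0] at hfind
      exact hfind hz2
    have hin : pt z ∈ (greedy γ S S' i).2 := by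
      by_contra h
      exact Nat.find_min hex (by omega) h
    rw [hi, greedy_snd_succ] at hfind
    have him : pt z ∈ (fun x => x + γ i) '' piece γ S S' i := by
      by_contra h
      exact hfind ⟨hin, h⟩
    obtain ⟨x, hx, hxz⟩ := him
    refine ⟨i, by omega, hqi ▸ hq (by omega), ?_⟩
    rw [← hxz]
    simpa using hx
  choose! I hIN hIq hI using hmatch
  let φ : ℕ × (Fin d → ℤ) → ℕ × (Fin d → ℤ) := fun z => (z.1 - q (I z), z.2 - r (I z))
  have hφ : ∀ z ∈ T S', pt (φ z) = pt z + -γ (I z) := by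
    intro z hz
    ext i
    simp only [pt, φ, hγ, toR, Pi.add_apply, Pi.smul_apply, Pi.sub_apply, Pi.neg_apply,
      Nat.cast_sub (hIq z hz), smul_eq_mul]
    push_cast
    ring
  have hpieceS : ∀ i, piece γ S S' i ⊆ S := fun i =>
    (piece_subset γ S S' i).trans (greedy_fst_anti γ S S' (Nat.zero_le i))
  have hbox : ∀ (k : ℕ) (p : Fin d → ℤ), k < n → pt (k, p) ∈ S → (k, p) ∈ T S := by
    intro k p hk hmem
    refine Finset.mem_filter.2 ⟨Finset.mem_product.2 ⟨Finset.mem_range.2 hk, ?_⟩, hmem⟩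
    by_contra hp
    exact hB s hsS k (hk.trans_le hnQ) p hp (Or.inl hmem)
  have hpt0 : pt (0, 0) = s := by
    ext i
    simp [pt]
  have h0 : ((0 : ℕ), (0 : Fin d → ℤ)) ∈ T S := hbox 0 0 hn (by rw [hpt0]; exact hsS)
  have hmaps : ∀ z ∈ T S', φ z ∈ (T S).erase (0, 0) := by
    intro z hz
    have hmem : pt (φ z) ∈ piece γ S S' (I z) := by rw [hφ z hz]; exact hI z hz
    refine Finset.mem_erase.2 ⟨fun h => ?_, ?_⟩
    · rw [h, hpt0] at hmem
      have h1 := greedy_fst_anti γ S S' (Nat.succ_le_of_lt (hIN z hz)) hs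
      simp only [Nat.succ_eq_add_one] at h1
      rw [greedy_fst_succ] at h1
      exact h1.2 hmem
    · refine hbox _ _ ?_ (hpieceS _ hmem)
      have := Finset.mem_range.1 (Finset.mem_product.1 (Finset.mem_filter.1 hz).1).1
      omega
  have hinj : Set.InjOn φ (T S') := by
    intro z hz w hw hzw
    have hzm : pt (φ z) ∈ piece γ S S' (I z) := by rw [hφ z hz]; exact hI z hz
    have hwm : pt (φ z) ∈ piece γ S S' (I w) := by rw [hzw, hφ w hw]; exact hI w hw
    have hII : I z = I w := by
      by_contra hne
      have := disjoint_of_removed (piece_subset γ S S') (greedy_fst_succ γ S S') hne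
      exact Set.eq_empty_iff_forall_notMem.1 this _ ⟨hzm, hwm⟩
    have h1 := congrArg Prod.fst hzw
    have h2 := congrArg Prod.snd hzw
    simp only [φ, hII] at h1 h2
    have h3 := hII ▸ hIq z hz
    have h4 := hIq w hw
    exact Prod.ext (by omega) (sub_left_injective h2)
  have hcard : (T S').card + 1 ≤ (T S).card := by
    have h1 := Finset.card_le_card_of_injOn φ hmaps hinj
    have h2 := Finset.card_erase_lt_of_mem h0
    omega
  have e1 : ∑ k ∈ Finset.range n, multFn S (s + (k : ℝ) • α) = (T S).card :=
    sum_multFn_eq_card fun k hk p hp h => hB s hsS k (hk.trans_le hnQ) p hp (Or.inl h)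
  have e2 : ∑ k ∈ Finset.range n, multFn S' (s + (k : ℝ) • α) = (T S').card :=
    sum_multFn_eq_card fun k hk p hp h => hB s hsS k (hk.trans_le hnQ) p hp (Or.inr h)
  rw [excess, Finset.sum_sub_distrib, e1, e2]
  have : ((T S').card : ℝ) + 1 ≤ (T S).card := by exact_mod_cast hcard
  linarith

/-- Enumeration of `{0, …, Q-1} × B` with nondecreasing first coordinate. -/
lemma exists_enum {X : Type*} [Inhabited X] (B : Finset X) (Q : ℕ) :
    ∃ (N : ℕ) (q : ℕ → ℕ) (r : ℕ → X), Monotone q ∧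
      ∀ k < Q, ∀ p ∈ B, ∃ i < N, q i = k ∧ r i = p := by
  let b := B.toList.length
  refine ⟨Q * b, fun i => i / b, fun i => B.toList.getD (i % b) default,
    fun i j h => Nat.div_le_div_right h, fun k hk p hp => ?_⟩
  obtain ⟨j, hj, hjp⟩ := List.getElem_of_mem (Finset.mem_toList.2 hp)
  have hj' : j < b := hj
  refine ⟨k * b + j, ?_, ?_, ?_⟩
  · calc k * b + j < k * b + b := by omega
      _ = (k + 1) * b := by ring
      _ ≤ Q * b := Nat.mul_le_mul_right _ hk
  · change (k * b + j) / b = k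
    rw [mul_comm k b, Nat.mul_add_div (by omega), Nat.div_eq_of_lt hj', add_zero]
  · change B.toList.getD ((k * b + j) % b) default = p
    rw [Nat.mul_add_mod_of_lt hj', List.getD_eq_getElem _ _ hj, hjp]

end BRS

/-- Two Riemann measurable bounded remainder sets of the same measure are
equidecomposable by Riemann measurable pieces, using translations by vectors in
`ℤα + ℤ^d` only. -/
theorem stmt3 {d : ℕ} (hd : 1 ≤ d) (α : Fin d → ℝ) (hα : IsIrrationalVector α)
    (S S' : Set (Fin d → ℝ)) (hS : IsRiemannMeasurable S) (hS' : IsRiemannMeasurable S')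
    (hb : IsBRS α S) (hb' : IsBRS α S') (hvol : volume S = volume S') :
    EquidecompBy IsRiemannMeasurable S S' (lat α) := by
  classical
  obtain ⟨Q, hQ⟩ := BRS.exists_positiveSet_null hα hS hS' hb hb' hvol
  obtain ⟨c, hc⟩ := hS.1.exists_norm_le
  obtain ⟨B, hB⟩ := BRS.exists_box (hS.1.union hS'.1) (c + Q * ‖α‖)
  obtain ⟨N, q, r, hq, hqr⟩ := BRS.exists_enum B Q
  let γ : ℕ → Fin d → ℝ := fun i => (q i : ℝ) • α + BRS.toR (r i)
  have hsub : (BRS.greedy γ S S' N).1 ⊆ BRS.positiveSet α S S' Q := by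
    refine BRS.unmatched_subset (fun s hs k hk => hB _ ?_) hq hqr
    refine norm_add_le_of_le (hc s hs) ?_
    rw [norm_smul, Real.norm_natCast]
    gcongr
  have hnull : volume (BRS.greedy γ S S' N).1 = 0 := measure_mono_null hsub hQ
  have hnull' : volume (BRS.greedy γ S S' N).2 = 0 := by
    rw [← BRS.greedy_volume γ hS hS' hvol]; exact hnull
  have hA := BRS.piece_subset γ S S'
  have hA' := BRS.image_piece_subset γ S S'
  have hR := BRS.greedy_fst_succ γ S S'
  have hR' := BRS.greedy_snd_succ γ S S'
  refine ⟨N, fun i => BRS.piece γ S S' i, fun i => γ i,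
    fun i => BRS.piece_riemannMeasurable γ hS hS' i,
    fun i => ⟨q i, r i, by simp [γ]⟩, fun i j hij => ?_, ?_, fun i j hij => ?_, ?_⟩
  · rw [BRS.disjoint_of_removed hA hR (Fin.val_injective.ne hij), measure_empty]
  · have h := BRS.symmDiff_iUnion_removed hA hR N
    exact (congrArg volume h).trans hnull
  · have h := BRS.disjoint_of_removed hA' hR' (Fin.val_injective.ne hij)
    exact (congrArg volume h).trans measure_empty
  · have h := BRS.symmDiff_iUnion_removed hA' hR' N
    exact (congrArg volume h).trans hnull'
end
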